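/- For any ε ∈ (0,1), any α > 0 and any pair of distributions (P1,P2) on a finite alphabet X with V(P1,P2,α) > 0, there exist a constant C > 0 and an integer n0 such that for all n ≥ n0, | λ*(n,α,ε|P1,P2) − GJS(P1,P2,α) − sqrt(V(P1,P2,α)/n)·Φ^{-1}(ε) | ≤ C·(log n)/n. -/

import Mathlib

open Filter Topology MeasureTheory

namespace Classification

variable {X : Type*} [Fintype X] [DecidableEq X]

/-- `P` is a probability mass function on the finite alphabet `X`. -/
def IsDist (P : X → ℝ) : Prop := (∀ x, 0 ≤ P x) ∧ ∑ x, P x = 1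

/-- `P` has full support. -/
def FullSupport (P : X → ℝ) : Prop := ∀ x, 0 < P x

/-- Empirical distribution (type) of a sequence `x : Fin m → X`. -/
noncomputable def empDist {m : ℕ} (x : Fin m → X) : X → ℝ :=
  fun a => ((Finset.univ.filter fun i => x i = a).card : ℝ) / m

/-- Real-valued KL divergence with the usual `0 · log 0 = 0` convention. -/
noncomputable def klDivR (Q P : X → ℝ) : ℝ := ∑ x, Q x * Real.log (Q x / P x)

open Classical in
/-- Extended-real-valued KL divergence: `⊤` when `Q` is not absolutely continuous w.r.t. `P`. -/
noncomputable def klDivE (Q P : X → ℝ) : EReal :=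
  if ∀ x, P x = 0 → Q x = 0 then ((klDivR Q P : ℝ) : EReal) else ⊤

/-- The mixture `(α P1 + P2) / (1 + α)`. -/
noncomputable def mix (P1 P2 : X → ℝ) (α : ℝ) : X → ℝ :=
  fun x => (α * P1 x + P2 x) / (1 + α)

/-- Generalized Jensen–Shannon divergence
`GJS(P1,P2,α) = α D(P1 ‖ (αP1+P2)/(1+α)) + D(P2 ‖ (αP1+P2)/(1+α))`. -/
noncomputable def GJS (P1 P2 : X → ℝ) (α : ℝ) : ℝ :=
  α * klDivR P1 (mix P1 P2 α) + klDivR P2 (mix P1 P2 α)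

/-- Training sequence length `N = ⌈α n⌉`. -/
noncomputable def trainLen (α : ℝ) (n : ℕ) : ℕ := ⌈α * (n : ℝ)⌉₊

/-- Probability of observing the sequence `x` under i.i.d. sampling from `P`. -/
noncomputable def seqProb (P : X → ℝ) {m : ℕ} (x : Fin m → X) : ℝ := ∏ i, P (x i)

/-- A binary classification test: output `true` means "declare H₂",
`false` means "declare H₁". -/
abbrev BTest (X : Type*) (α : ℝ) (n : ℕ) : Type _ :=
  (Fin (trainLen α n) → X) → (Fin (trainLen α n) → X) → (Fin n → X) → Bool

/-- Type-I error probability: probability of declaring `H₂` when `Y^n ~ P1` (hypothesis H₁). -/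
noncomputable def beta1 {α : ℝ} {n : ℕ} (φ : BTest X α n) (P1 P2 : X → ℝ) : ℝ :=
  ∑ x1 : Fin (trainLen α n) → X, ∑ x2 : Fin (trainLen α n) → X, ∑ y : Fin n → X,
    if φ x1 x2 y = true then seqProb P1 x1 * seqProb P2 x2 * seqProb P1 y else 0

/-- Type-II error probability: probability of declaring `H₁` when `Y^n ~ P2` (hypothesis H₂). -/
noncomputable def beta2 {α : ℝ} {n : ℕ} (φ : BTest X α n) (P1 P2 : X → ℝ) : ℝ :=
  ∑ x1 : Fin (trainLen α n) → X, ∑ x2 : Fin (trainLen α n) → X, ∑ y : Fin n → X,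
    if φ x1 x2 y = false then seqProb P1 x1 * seqProb P2 x2 * seqProb P2 y else 0

open Classical in
/-- Gutman's test with threshold `lam`: declare `H₁` iff `GJS(T̂_{x₁}, T̂_y, α) ≤ lam`. -/
noncomputable def gutman (α lam : ℝ) (n : ℕ) : BTest X α n :=
  fun x1 _ y => if GJS (empDist x1) (empDist y) α ≤ lam then false else true

open Classical in
/-- `- log x` as an extended real, with `⊤` at `x = 0`. -/
noncomputable def negLogE (x : ℝ) : EReal :=
  if x = 0 then ⊤ else ((-Real.log x : ℝ) : EReal)

/-- Gutman's exponent function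
`F(P1,P2,α,lam) = min { α D(Q1‖P1) + D(Q2‖P2) : GJS(Q1,Q2,α) ≤ lam }` (as an inf in `EReal`). -/
noncomputable def Fexp (P1 P2 : X → ℝ) (α lam : ℝ) : EReal :=
  sInf {v : EReal | ∃ Q1 Q2 : X → ℝ, IsDist Q1 ∧ IsDist Q2 ∧ GJS Q1 Q2 α ≤ lam ∧
    v = (α : EReal) * klDivE Q1 P1 + klDivE Q2 P2}

/-- Expectation of `f` under `P`. -/
noncomputable def expect (P : X → ℝ) (f : X → ℝ) : ℝ := ∑ x, P x * f x

/-- Variance of `f` under `P`. -/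
noncomputable def varD (P : X → ℝ) (f : X → ℝ) : ℝ :=
  expect P (fun x => (f x - expect P f) ^ 2)

/-- Information density `ı₁(x) = log((1+α) P1(x) / (α P1(x) + P2(x)))`. -/
noncomputable def iDens1 (P1 P2 : X → ℝ) (α : ℝ) (x : X) : ℝ :=
  Real.log ((1 + α) * P1 x / (α * P1 x + P2 x))

/-- Information density `ı₂(x) = log((1+α) P2(x) / (α P1(x) + P2(x)))`. -/
noncomputable def iDens2 (P1 P2 : X → ℝ) (α : ℝ) (x : X) : ℝ :=
  Real.log ((1 + α) * P2 x / (α * P1 x + P2 x))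

/-- The dispersion `V(P1,P2,α) = α Var_{P1}[ı₁] + Var_{P2}[ı₂]`. -/
noncomputable def disp (P1 P2 : X → ℝ) (α : ℝ) : ℝ :=
  α * varD P1 (iDens1 P1 P2 α) + varD P2 (iDens2 P1 P2 α)

/-- The standard Gaussian cumulative distribution function `Φ`. -/
noncomputable def stdCDF (x : ℝ) : ℝ :=
  (Real.sqrt (2 * Real.pi))⁻¹ * ∫ t in Set.Iic x, Real.exp (-t ^ 2 / 2)

/-- The inverse standard Gaussian cdf `Φ⁻¹`. -/
noncomputable def stdCDFInv (p : ℝ) : ℝ := sInf {x : ℝ | p ≤ stdCDF x}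

/-- The non-asymptotic fundamental limit `λ*(n, α, ε | P1, P2)` for binary classification. -/
noncomputable def lamStar (α : ℝ) (n : ℕ) (ε : ℝ) (P1 P2 : X → ℝ) : ℝ :=
  sSup {lam : ℝ | 0 ≤ lam ∧ ∃ φ : BTest X α n,
    (∀ Q1 Q2 : X → ℝ, IsDist Q1 → IsDist Q2 →
      beta1 φ Q1 Q2 ≤ Real.exp (-((n : ℝ) * lam))) ∧
    beta2 φ P1 P2 ≤ ε}

/-- Rényi divergence of order `γ`. -/
noncomputable def renyi (γ : ℝ) (P1 P2 : X → ℝ) : ℝ :=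
  (1 / (γ - 1)) * Real.log (∑ x, P1 x ^ γ * P2 x ^ (1 - γ))

/-- The fundamental limit `τ*(n, α, ε | φ_n^Gut, P1, P2)` in the dual setting for Gutman's test. -/
noncomputable def tauStarGut (α : ℝ) (n : ℕ) (ε : ℝ) (P1 P2 : X → ℝ) : ℝ :=
  sSup {τ : ℝ | 0 ≤ τ ∧ ∃ lam : ℝ, 0 ≤ lam ∧
    (∀ Q1 Q2 : X → ℝ, IsDist Q1 → IsDist Q2 →
      beta1 (gutman α lam n) Q1 Q2 ≤ ε) ∧
    beta2 (gutman α lam n) P1 P2 ≤ Real.exp (-((n : ℝ) * τ))}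

/-- A two-sample homogeneity test: `true` means "declare H₂" (different distributions). -/
abbrev TTest (X : Type*) (α : ℝ) (n : ℕ) : Type _ :=
  (Fin (trainLen α n) → X) → (Fin n → X) → Bool

/-- False-alarm probability of a two-sample test. -/
noncomputable def betaFA {α : ℝ} {n : ℕ} (φ : TTest X α n) (P1 : X → ℝ) : ℝ :=
  ∑ x : Fin (trainLen α n) → X, ∑ y : Fin n → X,
    if φ x y = true then seqProb P1 x * seqProb P1 y else 0

/-- Miss-detection probability of a two-sample test. -/
noncomputable def betaMD {α : ℝ} {n : ℕ} (φ : TTest X α n) (P1 P2 : X → ℝ) : ℝ :=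
  ∑ x : Fin (trainLen α n) → X, ∑ y : Fin n → X,
    if φ x y = false then seqProb P1 x * seqProb P2 y else 0

/-- The fundamental limit `ξ*(n, α, ε | P1, P2)` for two-sample homogeneity testing. -/
noncomputable def xiStar (α : ℝ) (n : ℕ) (ε : ℝ) (P1 P2 : X → ℝ) : ℝ :=
  sSup {lam : ℝ | 0 ≤ lam ∧ ∃ φ : TTest X α n,
    (∀ Q1 : X → ℝ, IsDist Q1 → betaFA φ Q1 ≤ Real.exp (-((n : ℝ) * lam))) ∧
    betaMD φ P1 P2 ≤ ε}

/-- An M-ary classification test with the rejection option: `some j` means "declare H_j",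
`none` means "reject". -/
abbrev MTest (X : Type*) (M : ℕ) (α : ℝ) (n : ℕ) : Type _ :=
  (Fin M → Fin (trainLen α n) → X) → (Fin n → X) → Option (Fin M)

/-- Type-`j` error probability: probability of declaring some hypothesis other than
`H_j` or rejection, under `H_j`. -/
noncomputable def betaM {M : ℕ} {α : ℝ} {n : ℕ} (ψ : MTest X M α n)
    (P : Fin M → X → ℝ) (j : Fin M) : ℝ :=
  ∑ xs : Fin M → Fin (trainLen α n) → X, ∑ y : Fin n → X,
    if ψ xs y ≠ some j ∧ ψ xs y ≠ none then
      (∏ i, seqProb (P i) (xs i)) * seqProb (P j) y else 0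

/-- Type-`j` rejection probability: probability of rejecting under `H_j`. -/
noncomputable def zetaM {M : ℕ} {α : ℝ} {n : ℕ} (ψ : MTest X M α n)
    (P : Fin M → X → ℝ) (j : Fin M) : ℝ :=
  ∑ xs : Fin M → Fin (trainLen α n) → X, ∑ y : Fin n → X,
    if ψ xs y = none then (∏ i, seqProb (P i) (xs i)) * seqProb (P j) y else 0

/-- The fundamental limit `λ*(n, α, ε | P)` for M-ary classification with rejection. -/
noncomputable def lamStarM (M : ℕ) (α : ℝ) (n : ℕ) (ε : Fin M → ℝ)
    (P : Fin M → X → ℝ) : ℝ :=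
  sSup {lam : ℝ | 0 ≤ lam ∧ ∃ ψ : MTest X M α n,
    (∀ Q : Fin M → X → ℝ, (∀ i, IsDist (Q i)) → ∀ j,
      betaM ψ Q j ≤ Real.exp (-((n : ℝ) * lam))) ∧
    (∀ j, zetaM ψ P j ≤ ε j)}

open Classical in
/-- Gutman's M-ary test with rejection and threshold `lam`. -/
noncomputable def gutmanM (M : ℕ) [NeZero M] (α lam : ℝ) (n : ℕ) : MTest X M α n :=
  fun xs y =>
    if ∃ i k : Fin M, i ≠ k ∧ GJS (empDist (xs i)) (empDist y) α ≤ lam ∧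
        GJS (empDist (xs k)) (empDist y) α ≤ lam then none
    else if h : ∃ j : Fin M, GJS (empDist (xs j)) (empDist y) α ≤ lam then some h.choose
    else some 0

/-- The fundamental limit `τ*(n, α, ε | Ψ_n^Gut, P)` in the dual setting for
Gutman's M-ary test. -/
noncomputable def tauStarGutM (M : ℕ) [NeZero M] (α : ℝ) (n : ℕ) (ε : ℝ)
    (P : Fin M → X → ℝ) : ℝ :=
  sSup {τ : ℝ | 0 ≤ τ ∧ ∃ lam : ℝ, 0 ≤ lam ∧
    (∀ Q : Fin M → X → ℝ, (∀ i, IsDist (Q i)) → ∀ j,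
      betaM (gutmanM M α lam n) Q j ≤ ε) ∧
    (∀ j, zetaM (gutmanM M α lam n) P j ≤ Real.exp (-((n : ℝ) * τ)))}

/-- Generalized divergence of three distributions
`D_γ(P1,P2,P3) = (γ-1)⁻¹ log Σ_x P1(x)^{1-γ} P2(x)^{γ/2} P3(x)^{γ/2}`. -/
noncomputable def genDiv (γ : ℝ) (P1 P2 P3 : X → ℝ) : ℝ :=
  (1 / (γ - 1)) * Real.log (∑ x, P1 x ^ (1 - γ) * P2 x ^ (γ / 2) * P3 x ^ (γ / 2))

/-- A binary classification test with the rejection option: `some 0` means "declare H₁",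
`some 1` means "declare H₂", `none` means "reject". -/
abbrev RTest (X : Type*) (α : ℝ) (n : ℕ) : Type _ :=
  (Fin (trainLen α n) → X) → (Fin (trainLen α n) → X) → (Fin n → X) → Option (Fin 2)

/-- Type-1 error probability of a rejection test: declare `H₂` under `H₁`. -/
noncomputable def beta1R {α : ℝ} {n : ℕ} (ψ : RTest X α n) (P1 P2 : X → ℝ) : ℝ :=
  ∑ x1 : Fin (trainLen α n) → X, ∑ x2 : Fin (trainLen α n) → X, ∑ y : Fin n → X,
    if ψ x1 x2 y = some 1 then seqProb P1 x1 * seqProb P2 x2 * seqProb P1 y else 0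

/-- Type-2 error probability of a rejection test: declare `H₁` under `H₂`. -/
noncomputable def beta2R {α : ℝ} {n : ℕ} (ψ : RTest X α n) (P1 P2 : X → ℝ) : ℝ :=
  ∑ x1 : Fin (trainLen α n) → X, ∑ x2 : Fin (trainLen α n) → X, ∑ y : Fin n → X,
    if ψ x1 x2 y = some 0 then seqProb P1 x1 * seqProb P2 x2 * seqProb P2 y else 0

open Classical in
/-- Type-`j` rejection probability of a binary rejection test. -/
noncomputable def zetaR {α : ℝ} {n : ℕ} (ψ : RTest X α n) (P1 P2 : X → ℝ) (j : Fin 2) : ℝ :=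
  ∑ x1 : Fin (trainLen α n) → X, ∑ x2 : Fin (trainLen α n) → X, ∑ y : Fin n → X,
    if ψ x1 x2 y = none then
      seqProb P1 x1 * seqProb P2 x2 * seqProb (if j = 0 then P1 else P2) y else 0

/-- A binary test is type-based if it depends on the data only through the
triple of empirical distributions. -/
def TypeBasedB {α : ℝ} {n : ℕ} (φ : BTest X α n) : Prop :=
  ∀ x1 x1' x2 x2' : Fin (trainLen α n) → X, ∀ y y' : Fin n → X,
    empDist x1 = empDist x1' → empDist x2 = empDist x2' → empDist y = empDist y' →
      φ x1 x2 y = φ x1' x2' y'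

/-- An M-ary test is type-based if it depends on the data only through the
tuple of empirical distributions. -/
def TypeBasedM {M : ℕ} {α : ℝ} {n : ℕ} (ψ : MTest X M α n) : Prop :=
  ∀ xs xs' : Fin M → Fin (trainLen α n) → X, ∀ y y' : Fin n → X,
    (∀ i, empDist (xs i) = empDist (xs' i)) → empDist y = empDist y' →
      ψ xs y = ψ xs' y'

open Classical in
/-- Probability of an event under hypothesis `H₂` in the binary setup. -/
noncomputable def prH2E (α : ℝ) (n : ℕ) (P1 P2 : X → ℝ)
    (E : (Fin (trainLen α n) → X) → (Fin (trainLen α n) → X) → (Fin n → X) → Prop) : ℝ :=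
  ∑ x1 : Fin (trainLen α n) → X, ∑ x2 : Fin (trainLen α n) → X, ∑ y : Fin n → X,
    if E x1 x2 y then seqProb P1 x1 * seqProb P2 x2 * seqProb P2 y else 0

open Classical in
/-- Probability of an event under hypothesis `H_j` in the M-ary setup. -/
noncomputable def prHjM (M : ℕ) (α : ℝ) (n : ℕ) (P : Fin M → X → ℝ) (j : Fin M)
    (E : (Fin M → Fin (trainLen α n) → X) → (Fin n → X) → Prop) : ℝ :=
  ∑ xs : Fin M → Fin (trainLen α n) → X, ∑ y : Fin n → X,
    if E xs y then (∏ i, seqProb (P i) (xs i)) * seqProb (P j) y else 0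

/-- `η_n(α) = |X| log(n+1)/n + 2|X| log(1+αn)/(αn)`. -/
noncomputable def etaN (X : Type*) [Fintype X] (α : ℝ) (n : ℕ) : ℝ :=
  (Fintype.card X : ℝ) * Real.log ((n : ℝ) + 1) / n +
    2 * (Fintype.card X : ℝ) * Real.log (1 + α * n) / (α * n)

/-- `η_{n,M} = M |X| log(nα+1)/(nα) + |X| log(n+1)/n`. -/
noncomputable def etaNM (X : Type*) [Fintype X] (M : ℕ) (α : ℝ) (n : ℕ) : ℝ :=
  (M : ℝ) * (Fintype.card X : ℝ) * Real.log ((n : ℝ) * α + 1) / ((n : ℝ) * α) +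
    (Fintype.card X : ℝ) * Real.log ((n : ℝ) + 1) / n

/-- `Q` is an `m`-type: the empirical distribution of some sequence of length `m`. -/
def IsTypeDist (m : ℕ) (Q : X → ℝ) : Prop := ∃ x : Fin m → X, empDist x = Q

/-- The type-restricted exponent function `F_n`. -/
noncomputable def Fn (n : ℕ) (P1 P2 : X → ℝ) (α lam : ℝ) : ℝ :=
  sInf {v : ℝ | ∃ Q1 Q2 : X → ℝ, IsTypeDist (trainLen α n) Q1 ∧ IsTypeDist n Q2 ∧
    GJS Q1 Q2 α ≤ lam ∧ v = α * klDivR Q1 P1 + klDivR Q2 P2}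

/-- The second smallest value of a finite family of reals:
`min_{i ≠ j} max (v i) (v j)`. -/
noncomputable def secondMin {M : ℕ} (v : Fin M → ℝ) : ℝ :=
  sInf {t : ℝ | ∃ i j : Fin M, i ≠ j ∧ t = max (v i) (v j)}

/-- The tilted distribution `P^{(γ)}` with `γ = α/(1+α)`. -/
noncomputable def tilt (α : ℝ) (P1 P2 : X → ℝ) : X → ℝ :=
  fun x => P1 x ^ (α / (1 + α)) * P2 x ^ (1 / (1 + α)) /
    ∑ a, P1 a ^ (α / (1 + α)) * P2 a ^ (1 / (1 + α))

/-!
Write `M` for the mixture `mix P1 P2 α`. A test with type-I error at most `exp (-n lam)` for every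
pair of distributions has it in particular for `(M, P2)`, whose sample is `(x₁, y) ∼ Mᴺ × Mⁿ`,
while under `H₂` it is `P1ᴺ × P2ⁿ`. By the Neyman–Pearson argument its type-II error is therefore
at least about the probability that the log-likelihood ratio `∑ ı₁(x₁ᵢ) + ∑ ı₂(yⱼ)` falls below
`n lam`. Conversely, the test that thresholds this ratio is universally good: under any `(Q₁, Q₂)`
the likelihood ratio has expectation `E[P1/M]ᴺ E[P2/M]ⁿ`, and `α E[P1/M] + E[P2/M] ≤ 1 + α` bounds
this by a constant. So `lamStar` is, up to `O(log n / n)`, the `ε`-quantile of a normalized sum of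
independent bounded variables with mean `≈ n GJS` and variance `≈ n V`. The Berry–Esseen bound
that locates this quantile is proved for bounded summands by Stein's method.
-/

open ProbabilityTheory

section RealAnalysis

lemma norm_sub_le_of_hasDerivWithinAt_Ici {E : Type*} [NormedAddCommGroup E] [NormedSpace ℝ E]
    {f f' : ℝ → E} (hf : ∀ x, HasDerivWithinAt f (f' x) (Set.Ici x) x) (hcont : Continuous f)
    {B a b : ℝ} (hB : ∀ x ∈ Set.uIcc a b, ‖f' x‖ ≤ B) : ‖f b - f a‖ ≤ B * |b - a| := by
  wlog hab : a ≤ b generalizing a b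
  · rw [norm_sub_rev, abs_sub_comm]
    exact this (Set.uIcc_comm a b ▸ hB) (le_of_not_ge hab)
  rw [Set.uIcc_of_le hab] at hB
  rw [abs_of_nonneg (sub_nonneg.2 hab)]
  exact norm_image_sub_le_of_norm_deriv_right_le_segment hcont.continuousOn (fun x _ => hf x)
    (fun x hx => hB x (Set.Ico_subset_Icc_self hx)) b ⟨hab, le_rfl⟩

lemma apply_sInf_setOf_le {f : ℝ → ℝ} (hmono : Monotone f) (hcont : Continuous f) {a b y : ℝ}
    (ha : f a < y) (hb : y ≤ f b) : f (sInf {x | y ≤ f x}) = y := by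
  have hbdd : BddBelow {x | y ≤ f x} :=
    ⟨a, fun x hx => (hmono.reflect_lt (ha.trans_le hx)).le⟩
  refine le_antisymm ?_
    ((isClosed_le continuous_const hcont).csInf_mem (s := {x | y ≤ f x}) ⟨b, hb⟩ hbdd)
  obtain ⟨x, rfl⟩ := mem_range_of_exists_le_of_exists_ge hcont ⟨a, ha.le⟩ ⟨b, hb⟩
  exact hmono (csInf_le hbdd (le_refl (f x)))

end RealAnalysis

section Gaussian

/-- The standard Gaussian density `φ`. -/
noncomputable def stdPDF : ℝ → ℝ := gaussianPDFReal 0 1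

lemma stdPDF_apply (x : ℝ) : stdPDF x = (√(2 * Real.pi))⁻¹ * Real.exp (-x ^ 2 / 2) := by
  simp [stdPDF, gaussianPDFReal_def]

lemma stdPDF_pos (x : ℝ) : 0 < stdPDF x := gaussianPDFReal_pos 0 1 x one_ne_zero

lemma integrable_stdPDF : Integrable stdPDF := integrable_gaussianPDFReal 0 1

lemma stdPDF_neg (x : ℝ) : stdPDF (-x) = stdPDF x := by simp only [stdPDF_apply, neg_sq]

lemma stdPDF_le_of_abs_le {x y : ℝ} (h : |x| ≤ |y|) : stdPDF y ≤ stdPDF x := by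
  have := sq_le_sq.2 h
  rw [stdPDF_apply, stdPDF_apply]
  gcongr

lemma stdPDF_le_one (x : ℝ) : stdPDF x ≤ 1 := by
  have hsqrt : 1 ≤ √(2 * Real.pi) := Real.one_le_sqrt.2 (by linarith [Real.pi_gt_three])
  have hexp : Real.exp (-x ^ 2 / 2) ≤ 1 := Real.exp_le_one_iff.2 (by nlinarith [sq_nonneg x])
  rw [stdPDF_apply]
  exact mul_le_one₀ (inv_le_one_of_one_le₀ hsqrt) (Real.exp_nonneg _) hexp

lemma hasDerivAt_stdPDF (x : ℝ) : HasDerivAt stdPDF (-x * stdPDF x) x := by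
  have hsq : HasDerivAt (fun x : ℝ => -x ^ 2 / 2) (-x) x :=
    ((hasDerivAt_pow 2 x).fun_neg.div_const 2).congr_deriv (by norm_num; ring)
  rw [funext stdPDF_apply]
  exact (hsq.exp.const_mul (√(2 * Real.pi))⁻¹).congr_deriv (by ring)

lemma continuous_stdPDF : Continuous stdPDF :=
  continuous_iff_continuousAt.2 fun x => (hasDerivAt_stdPDF x).continuousAt

lemma integrable_neg_mul_stdPDF : Integrable fun t => -t * stdPDF t := by
  refine ((integrable_mul_exp_neg_mul_sq one_half_pos).const_mul (-(√(2 * Real.pi))⁻¹)).congr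
    (.of_forall fun t => ?_)
  simp only [stdPDF_apply, show -(1 / 2) * t ^ 2 = -t ^ 2 / 2 by ring]
  ring

lemma tendsto_stdPDF_atBot : Tendsto stdPDF atBot (𝓝 0) := by
  have hsq : Tendsto (fun t : ℝ => t ^ 2) atBot atTop := by
    simpa only [Function.comp_def, sq_abs] using
      (tendsto_pow_atTop two_ne_zero).comp (tendsto_abs_atBot_atTop (G := ℝ))
  have hexponent : Tendsto (fun t : ℝ => -t ^ 2 / 2) atBot atBot :=
    (tendsto_neg_atTop_atBot.comp hsq).atBot_div_const two_pos
  simpa only [funext stdPDF_apply, mul_zero, Function.comp_def]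
    using (Real.tendsto_exp_atBot.comp hexponent).const_mul (√(2 * Real.pi))⁻¹

lemma stdCDF_eq_setIntegral (x : ℝ) : stdCDF x = ∫ t in Set.Iic x, stdPDF t := by
  rw [stdCDF, ← integral_const_mul]
  simp only [stdPDF_apply]

lemma stdCDF_eq_cdf : stdCDF = cdf (gaussianReal 0 1) := by
  ext x
  rw [cdf_eq_real, Measure.real, gaussianReal_apply_eq_integral 0 one_ne_zero, ← stdPDF,
    ← stdCDF_eq_setIntegral, ENNReal.toReal_ofReal]
  rw [stdCDF_eq_setIntegral]
  exact setIntegral_nonneg measurableSet_Iic fun t _ => (stdPDF_pos t).le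

lemma stdCDF_nonneg (x : ℝ) : 0 ≤ stdCDF x := stdCDF_eq_cdf ▸ cdf_nonneg _ x

lemma stdCDF_le_one (x : ℝ) : stdCDF x ≤ 1 := stdCDF_eq_cdf ▸ cdf_le_one _ x

lemma monotone_stdCDF : Monotone stdCDF := stdCDF_eq_cdf ▸ monotone_cdf _

lemma stdCDF_sub_stdCDF (a b : ℝ) : stdCDF b - stdCDF a = ∫ t in a..b, stdPDF t := by
  rw [stdCDF_eq_setIntegral, stdCDF_eq_setIntegral]
  exact intervalIntegral.integral_Iic_sub_Iic integrable_stdPDF.integrableOn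
    integrable_stdPDF.integrableOn

lemma hasDerivAt_stdCDF (x : ℝ) : HasDerivAt stdCDF (stdPDF x) x := by
  have hΦ : stdCDF = fun u => (∫ t in (0 : ℝ)..u, stdPDF t) + stdCDF 0 := by
    ext u
    rw [← stdCDF_sub_stdCDF, sub_add_cancel]
  rw [hΦ]
  exact (continuous_stdPDF.integral_hasStrictDerivAt 0 x).hasDerivAt.add_const _

lemma continuous_stdCDF : Continuous stdCDF :=
  continuous_iff_continuousAt.2 fun x => (hasDerivAt_stdCDF x).continuousAt

lemma stdCDF_neg (x : ℝ) : stdCDF (-x) = 1 - stdCDF x := by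
  have hcompl := integral_add_compl (s := Set.Iic x) measurableSet_Iic integrable_stdPDF
  have hneg := integral_comp_neg_Iic (-x) stdPDF
  have htotal : ∫ t, stdPDF t = 1 := integral_gaussianPDFReal_eq_one 0 one_ne_zero
  simp only [stdPDF_neg, neg_neg] at hneg
  rw [Set.compl_Iic, htotal] at hcompl
  rw [stdCDF_eq_setIntegral, stdCDF_eq_setIntegral, hneg]
  linarith

lemma stdCDF_stdCDFInv {p : ℝ} (hp : p ∈ Set.Ioo (0 : ℝ) 1) : stdCDF (stdCDFInv p) = p := by
  have hbot : Tendsto stdCDF atBot (𝓝 0) := stdCDF_eq_cdf ▸ tendsto_cdf_atBot _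
  have htop : Tendsto stdCDF atTop (𝓝 1) := stdCDF_eq_cdf ▸ tendsto_cdf_atTop _
  obtain ⟨a, ha⟩ := (hbot.eventually_lt_const hp.1).exists
  obtain ⟨b, hb⟩ := (htop.eventually_const_lt hp.2).exists
  exact apply_sInf_setOf_le monotone_stdCDF continuous_stdCDF ha hb.le

lemma abs_stdCDF_sub_le (a b : ℝ) : |stdCDF b - stdCDF a| ≤ |b - a| := by
  simpa only [Real.norm_eq_abs, one_mul] using
    norm_sub_le_of_hasDerivWithinAt_Ici (fun x => (hasDerivAt_stdCDF x).hasDerivWithinAt)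
      continuous_stdCDF
      (fun x _ => (abs_of_pos (stdPDF_pos x)).trans_le (stdPDF_le_one x))

lemma mul_sub_le_stdCDF_sub {r a b : ℝ} (ha : -r ≤ a) (hab : a ≤ b) (hb : b ≤ r) :
    stdPDF r * (b - a) ≤ stdCDF b - stdCDF a := by
  rw [stdCDF_sub_stdCDF, mul_comm, ← smul_eq_mul, ← intervalIntegral.integral_const]
  refine intervalIntegral.integral_mono_on hab intervalIntegrable_const
    (continuous_stdPDF.intervalIntegrable a b) fun t ht => stdPDF_le_of_abs_le ?_
  exact (abs_le.2 ⟨ha.trans ht.1, ht.2.trans hb⟩).trans (le_abs_self r)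

lemma integral_Iic_neg_mul_stdPDF (w : ℝ) : ∫ t in Set.Iic w, -t * stdPDF t = stdPDF w := by
  simpa only [sub_zero] using
    integral_Iic_of_hasDerivAt_of_tendsto continuous_stdPDF.continuousWithinAt
      (fun t _ => hasDerivAt_stdPDF t) integrable_neg_mul_stdPDF.integrableOn tendsto_stdPDF_atBot

lemma neg_mul_stdCDF_le_stdPDF (w : ℝ) : -w * stdCDF w ≤ stdPDF w := by
  rw [← integral_Iic_neg_mul_stdPDF, stdCDF_eq_setIntegral, ← integral_const_mul]
  exact setIntegral_mono_on (integrable_stdPDF.const_mul _).integrableOn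
    integrable_neg_mul_stdPDF.integrableOn measurableSet_Iic
    fun t ht => mul_le_mul_of_nonneg_right (neg_le_neg ht) (stdPDF_pos t).le

lemma stdCDF_le_inv_mul_stdPDF {w : ℝ} (hw : w ≤ 0) : stdCDF w ≤ (stdPDF 1)⁻¹ * stdPDF w := by
  have hone := stdPDF_pos 1
  rcases le_total w (-1) with h | h
  · calc stdCDF w ≤ -w * stdCDF w := le_mul_of_one_le_left (stdCDF_nonneg w) (by linarith)
      _ ≤ stdPDF w := neg_mul_stdCDF_le_stdPDF w
      _ ≤ (stdPDF 1)⁻¹ * stdPDF w :=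
        le_mul_of_one_le_left (stdPDF_pos w).le ((one_le_inv₀ hone).2 (stdPDF_le_one 1))
  · refine (stdCDF_le_one w).trans ?_
    rw [inv_mul_eq_div, one_le_div hone]
    exact stdPDF_le_of_abs_le (by rw [abs_one, abs_le]; constructor <;> linarith)

end Gaussian

section SteinEquation

/-- The bounded solution of Stein's equation `f' w - w * f w = 𝟙 (w < z) - Φ z` for the
half-line `(-∞, z)`. -/
noncomputable def steinSol (z w : ℝ) : ℝ :=
  (stdCDF (min w z) - stdCDF w * stdCDF z) / stdPDF w

/-- The right derivative of `steinSol z`, written through Stein's equation. -/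
noncomputable def steinDeriv (z w : ℝ) : ℝ :=
  w * steinSol z w + (Set.Iio z).indicator 1 w - stdCDF z

lemma steinSol_nonneg (z w : ℝ) : 0 ≤ steinSol z w := by
  refine div_nonneg (sub_nonneg.2 ?_) (stdPDF_pos w).le
  rcases le_total w z with h | h
  · rw [min_eq_left h]
    exact mul_le_of_le_one_right (stdCDF_nonneg w) (stdCDF_le_one z)
  · rw [min_eq_right h]
    exact mul_le_of_le_one_left (stdCDF_nonneg z) (stdCDF_le_one w)

lemma steinSol_mul_stdPDF_le (z w : ℝ) :
    steinSol z w * stdPDF w ≤ stdCDF w ∧ steinSol z w * stdPDF w ≤ stdCDF (-w) := by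
  rw [steinSol, div_mul_cancel₀ _ (stdPDF_pos w).ne', stdCDF_neg]
  have hw := monotone_stdCDF (min_le_left w z)
  have hz := monotone_stdCDF (min_le_right w z)
  have hprod := mul_nonneg (stdCDF_nonneg w) (stdCDF_nonneg z)
  have hcompl := mul_nonneg (sub_nonneg.2 (stdCDF_le_one w)) (sub_nonneg.2 (stdCDF_le_one z))
  constructor <;> linarith

lemma steinSol_le (z w : ℝ) : steinSol z w ≤ (stdPDF 1)⁻¹ := by
  obtain ⟨hleft, hright⟩ := steinSol_mul_stdPDF_le z w
  refine le_of_mul_le_mul_right ?_ (stdPDF_pos w)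
  rcases le_total w 0 with h | h
  · exact hleft.trans (stdCDF_le_inv_mul_stdPDF h)
  · exact hright.trans (stdPDF_neg w ▸ stdCDF_le_inv_mul_stdPDF (neg_nonpos.2 h))

lemma abs_steinSol_le (z w : ℝ) : |steinSol z w| ≤ (stdPDF 1)⁻¹ :=
  (abs_of_nonneg (steinSol_nonneg z w)).trans_le (steinSol_le z w)

lemma abs_mul_steinSol_le_one (z w : ℝ) : |w * steinSol z w| ≤ 1 := by
  obtain ⟨hleft, hright⟩ := steinSol_mul_stdPDF_le z w
  refine le_of_mul_le_mul_right ?_ (stdPDF_pos w)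
  rw [abs_mul, abs_of_nonneg (steinSol_nonneg z w), mul_assoc, one_mul]
  rcases le_total w 0 with h | h
  · rw [abs_of_nonpos h]
    exact (mul_le_mul_of_nonneg_left hleft (neg_nonneg.2 h)).trans (neg_mul_stdCDF_le_stdPDF w)
  · have hmills := neg_mul_stdCDF_le_stdPDF (-w)
    rw [neg_neg, stdPDF_neg] at hmills
    rw [abs_of_nonneg h]
    exact (mul_le_mul_of_nonneg_left hright h).trans hmills

lemma continuous_steinSol (z : ℝ) : Continuous (steinSol z) := by
  have hΦ := continuous_stdCDF
  exact .div (by fun_prop) continuous_stdPDF fun w => (stdPDF_pos w).ne'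

lemma measurable_steinDeriv (z : ℝ) : Measurable (steinDeriv z) :=
  ((measurable_id.mul (continuous_steinSol z).measurable).add
    (measurable_one.indicator measurableSet_Iio)).sub_const _

lemma hasDerivWithinAt_stdCDF_min (z w : ℝ) :
    HasDerivWithinAt (fun w => stdCDF (min w z)) ((Set.Iio z).indicator 1 w * stdPDF w)
      (Set.Ici w) w := by
  by_cases h : w < z
  · simp only [Set.indicator_of_mem (Set.mem_Iio.2 h), Pi.one_apply, one_mul]
    refine ((hasDerivAt_stdCDF w).congr_of_eventuallyEq ?_).hasDerivWithinAt
    filter_upwards [eventually_lt_nhds h] with x hx using by rw [min_eq_left hx.le]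
  · simp only [Set.indicator_of_notMem (Set.notMem_Iio.2 (not_lt.1 h)), zero_mul]
    refine (hasDerivWithinAt_const w _ (stdCDF z)).congr (fun x hx => ?_) ?_
    · rw [min_eq_right ((not_lt.1 h).trans hx)]
    · rw [min_eq_right (not_lt.1 h)]

lemma hasDerivWithinAt_steinSol (z w : ℝ) :
    HasDerivWithinAt (steinSol z) (steinDeriv z w) (Set.Ici w) w := by
  have hφ := (stdPDF_pos w).ne'
  refine (((hasDerivWithinAt_stdCDF_min z w).fun_sub
    ((hasDerivAt_stdCDF w).mul_const (stdCDF z)).hasDerivWithinAt).div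
      (hasDerivAt_stdPDF w).hasDerivWithinAt hφ).congr_deriv ?_
  rw [steinDeriv, steinSol]
  field_simp
  ring

lemma abs_steinDeriv_le_two (z w : ℝ) : |steinDeriv z w| ≤ 2 := by
  obtain ⟨hlo, hhi⟩ := abs_le.1 (abs_mul_steinSol_le_one z w)
  have hΦ₀ := stdCDF_nonneg z
  have hΦ₁ := stdCDF_le_one z
  rw [steinDeriv, abs_le]
  rcases Set.indicator_eq_zero_or_self (Set.Iio z) (1 : ℝ → ℝ) w with h | h <;>
    rw [h] <;> constructor <;> norm_num <;> linarith

lemma abs_steinSol_sub_le (z a b : ℝ) : |steinSol z b - steinSol z a| ≤ 2 * |b - a| :=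
  norm_sub_le_of_hasDerivWithinAt_Ici (hasDerivWithinAt_steinSol z) (continuous_steinSol z)
    fun w _ => abs_steinDeriv_le_two z w

/-- An upper bound for the oscillation of `steinDeriv z` on the ball of radius `δ` around `w`. -/
noncomputable def steinDerivMod (z δ w : ℝ) : ℝ :=
  δ * ((stdPDF 1)⁻¹ + 2 * |w|) + (Metric.closedBall z δ).indicator 1 w

lemma abs_indicator_Iio_sub_le {z δ s w : ℝ} (h : |s - w| ≤ δ) :
    |(Set.Iio z).indicator (1 : ℝ → ℝ) s - (Set.Iio z).indicator 1 w| ≤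
      (Metric.closedBall z δ).indicator 1 w := by
  by_cases hball : w ∈ Metric.closedBall z δ
  · rw [Set.indicator_of_mem hball]
    simp only [Set.indicator, Pi.one_apply]
    split_ifs <;> norm_num
  · rw [Metric.mem_closedBall, Real.dist_eq, abs_le, not_and_or, not_le, not_le] at hball
    have hiff : s ∈ Set.Iio z ↔ w ∈ Set.Iio z := by
      simp only [Set.mem_Iio]
      constructor <;> intro <;> rcases hball with hball | hball <;> linarith [abs_le.1 h]
    simp only [Set.indicator, hiff, sub_self, abs_zero, Pi.one_apply]
    positivity

lemma abs_steinDeriv_sub_le (z : ℝ) {δ s w : ℝ} (h : |s - w| ≤ δ) :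
    |steinDeriv z s - steinDeriv z w| ≤ steinDerivMod z δ w := by
  have hmul : |s * steinSol z s - w * steinSol z w| ≤ δ * ((stdPDF 1)⁻¹ + 2 * |w|) := by
    calc |s * steinSol z s - w * steinSol z w|
        = |(s - w) * steinSol z s + w * (steinSol z s - steinSol z w)| := by congr 1; ring
      _ ≤ |s - w| * |steinSol z s| + |w| * |steinSol z s - steinSol z w| := by
        simpa only [abs_mul] using
          abs_add_le ((s - w) * steinSol z s) (w * (steinSol z s - steinSol z w))
      _ ≤ δ * (stdPDF 1)⁻¹ + |w| * (2 * δ) := by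
        have := (abs_nonneg _).trans h
        gcongr
        · exact abs_steinSol_le z s
        · exact (abs_steinSol_sub_le z w s).trans (by gcongr)
      _ = δ * ((stdPDF 1)⁻¹ + 2 * |w|) := by ring
  calc |steinDeriv z s - steinDeriv z w|
      = |(s * steinSol z s - w * steinSol z w) +
          ((Set.Iio z).indicator 1 s - (Set.Iio z).indicator 1 w)| := by
        rw [steinDeriv, steinDeriv]; congr 1; ring
    _ ≤ steinDerivMod z δ w :=
        (abs_add_le _ _).trans (add_le_add hmul (abs_indicator_Iio_sub_le h))

lemma abs_steinSol_add_sub_sub_mul_le (z : ℝ) {δ w t : ℝ} (h : |t| ≤ δ) :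
    |steinSol z (w + t) - steinSol z w - t * steinDeriv z w| ≤ |t| * steinDerivMod z δ w := by
  have hderiv (x : ℝ) : HasDerivWithinAt (fun s => steinSol z s - s * steinDeriv z w)
      (steinDeriv z x - steinDeriv z w) (Set.Ici x) x := by
    refine ((hasDerivWithinAt_steinSol z x).fun_sub
      ((hasDerivAt_id' x).hasDerivWithinAt.mul_const (steinDeriv z w))).congr_deriv ?_
    rw [one_mul]
  have hosc (x : ℝ) (hx : x ∈ Set.uIcc w (w + t)) :
      |steinDeriv z x - steinDeriv z w| ≤ steinDerivMod z δ w := by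
    refine abs_steinDeriv_sub_le z ((Set.abs_sub_left_of_mem_uIcc hx).trans ?_)
    rwa [add_sub_cancel_left]
  have hmvt := norm_sub_le_of_hasDerivWithinAt_Ici hderiv
    ((continuous_steinSol z).sub (continuous_mul_const _)) hosc
  rw [add_sub_cancel_left, Real.norm_eq_abs, mul_comm _ |t|] at hmvt
  calc |steinSol z (w + t) - steinSol z w - t * steinDeriv z w|
      = |steinSol z (w + t) - (w + t) * steinDeriv z w -
          (steinSol z w - w * steinDeriv z w)| := by congr 1; ring
    _ ≤ |t| * steinDerivMod z δ w := hmvt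

end SteinEquation

section SteinMethod

variable {Ω : Type*} [MeasurableSpace Ω] {μ : Measure Ω} [IsProbabilityMeasure μ]

lemma nonneg_of_ae_abs_le {T : Ω → ℝ} {δ : ℝ} (hT : ∀ᵐ ω ∂μ, |T ω| ≤ δ) : 0 ≤ δ :=
  hT.exists.elim fun _ h => (abs_nonneg _).trans h

lemma integrable_sq_of_ae_abs_le {T : Ω → ℝ} (hT : AEMeasurable T μ) {δ : ℝ}
    (hTδ : ∀ᵐ ω ∂μ, |T ω| ≤ δ) : Integrable (fun ω => T ω ^ 2) μ :=
  (MemLp.of_bound hT.aestronglyMeasurable δ hTδ).integrable_sq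

lemma integrable_of_ae_abs_le {T : Ω → ℝ} (hT : AEMeasurable T μ) {δ : ℝ}
    (hTδ : ∀ᵐ ω ∂μ, |T ω| ≤ δ) : Integrable T μ :=
  .of_bound hT.aestronglyMeasurable δ hTδ

omit [IsProbabilityMeasure μ] in
lemma integrable_mul_comp {T Y : Ω → ℝ} (hT : Integrable T μ) (hY : AEMeasurable Y μ)
    {g : ℝ → ℝ} (hg : Measurable g) {B : ℝ} (hgB : ∀ t, |g t| ≤ B) :
    Integrable (fun ω => T ω * g (Y ω)) μ :=
  hT.mul_bdd (hg.comp_aemeasurable hY).aestronglyMeasurable (.of_forall fun ω => hgB (Y ω))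

lemma integrable_indicator_one_comp {U : Ω → ℝ} (hU : AEMeasurable U μ) {s : Set ℝ}
    (hs : MeasurableSet s) : Integrable (fun ω => s.indicator (1 : ℝ → ℝ) (U ω)) μ := by
  refine .of_bound ((measurable_one.indicator hs).comp_aemeasurable hU).aestronglyMeasurable 1
    (.of_forall fun ω => ?_)
  exact (norm_indicator_le_norm_self 1 (U ω)).trans norm_one.le

omit [IsProbabilityMeasure μ] in
lemma integral_indicator_one_comp {U : Ω → ℝ} (hU : AEMeasurable U μ) {s : Set ℝ}
    (hs : MeasurableSet s) :
    ∫ ω, s.indicator (1 : ℝ → ℝ) (U ω) ∂μ = μ.real (U ⁻¹' s) := by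
  have hcomp := integral_indicator₀ (hU.nullMeasurableSet_preimage hs) (f := fun _ => (1 : ℝ))
  rwa [setIntegral_const, smul_eq_mul, mul_one] at hcomp

lemma integrable_steinDeriv_comp {U : Ω → ℝ} (hU : AEMeasurable U μ) (z : ℝ) :
    Integrable (fun ω => steinDeriv z (U ω)) μ :=
  .of_bound ((measurable_steinDeriv z).comp_aemeasurable hU).aestronglyMeasurable 2
    (.of_forall fun ω => abs_steinDeriv_le_two z (U ω))

lemma measurable_steinDerivMod (z δ : ℝ) : Measurable (steinDerivMod z δ) :=
  (((measurable_id.abs.const_mul 2).const_add _).const_mul δ).add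
    (measurable_one.indicator measurableSet_closedBall)

lemma integrable_steinDerivMod_comp {U : Ω → ℝ} (hU : Integrable U μ) (z δ : ℝ) :
    Integrable (fun ω => steinDerivMod z δ (U ω)) μ :=
  (((integrable_const _).add (hU.abs.const_mul 2)).const_mul δ).add
    (integrable_indicator_one_comp hU.aemeasurable measurableSet_closedBall)

lemma abs_integral_steinDeriv_add_sub_le {T U : Ω → ℝ} (hT : AEMeasurable T μ) {δ : ℝ}
    (hTδ : ∀ᵐ ω ∂μ, |T ω| ≤ δ) (hU : Integrable U μ) (z : ℝ) :
    |∫ ω, steinDeriv z (U ω + T ω) ∂μ - ∫ ω, steinDeriv z (U ω) ∂μ| ≤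
      ∫ ω, steinDerivMod z δ (U ω) ∂μ := by
  have hUT : AEMeasurable (fun ω => U ω + T ω) μ := hU.aemeasurable.add hT
  rw [← integral_sub (integrable_steinDeriv_comp hUT z)
    (integrable_steinDeriv_comp hU.aemeasurable z), ← Real.norm_eq_abs]
  refine norm_integral_le_of_norm_le (integrable_steinDerivMod_comp hU z δ)
    (hTδ.mono fun ω hω => abs_steinDeriv_sub_le z ?_)
  rwa [add_sub_cancel_left]

lemma abs_integral_mul_steinSol_sub_le {T U : Ω → ℝ} (hindep : T ⟂ᵢ[μ] U)
    (hT : AEMeasurable T μ) {δ : ℝ} (hTδ : ∀ᵐ ω ∂μ, |T ω| ≤ δ) (hU : Integrable U μ) (z : ℝ) :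
    |∫ ω, T ω * (steinSol z (U ω + T ω) - steinSol z (U ω)) ∂μ -
        (∫ ω, T ω ^ 2 ∂μ) * ∫ ω, steinDeriv z (U ω) ∂μ| ≤
      (∫ ω, T ω ^ 2 ∂μ) * ∫ ω, steinDerivMod z δ (U ω) ∂μ := by
  have hUm := hU.aemeasurable
  have hUT : AEMeasurable (fun ω => U ω + T ω) μ := hUm.add hT
  have hincr : Integrable (fun ω => T ω * (steinSol z (U ω + T ω) - steinSol z (U ω))) μ := by
    have hsol {Y : Ω → ℝ} (hY : AEMeasurable Y μ) :=
      integrable_mul_comp (integrable_of_ae_abs_le hT hTδ) hY (continuous_steinSol z).measurable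
        (abs_steinSol_le z)
    simpa only [mul_sub, Pi.sub_def] using (hsol hUT).sub (hsol hUm)
  have hsq := integrable_sq_of_ae_abs_le hT hTδ
  have hderiv := integrable_steinDeriv_comp hUm z
  have hmod := integrable_steinDerivMod_comp hU z δ
  have hindep_sq {g : ℝ → ℝ} (hg : Measurable g) : (fun ω => T ω ^ 2) ⟂ᵢ[μ] fun ω => g (U ω) :=
    hindep.comp (measurable_id.pow_const 2) hg
  have hsq_deriv := hindep_sq (measurable_steinDeriv z)
  have hsq_mod := hindep_sq (measurable_steinDerivMod z δ)
  have hmain : Integrable (fun ω => T ω ^ 2 * steinDeriv z (U ω)) μ :=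
    hsq_deriv.integrable_mul hsq hderiv
  rw [← hsq_deriv.integral_fun_mul_eq_mul_integral hsq.1 hderiv.1,
    ← hsq_mod.integral_fun_mul_eq_mul_integral hsq.1 hmod.1, ← integral_sub hincr hmain,
    ← Real.norm_eq_abs]
  refine norm_integral_le_of_norm_le (hsq_mod.integrable_mul hsq hmod)
    (hTδ.mono fun ω hω => ?_)
  calc ‖T ω * (steinSol z (U ω + T ω) - steinSol z (U ω)) - T ω ^ 2 * steinDeriv z (U ω)‖
      = |T ω| * |steinSol z (U ω + T ω) - steinSol z (U ω) - T ω * steinDeriv z (U ω)| := by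
        rw [← abs_mul, Real.norm_eq_abs]; congr 1; ring
    _ ≤ |T ω| * (|T ω| * steinDerivMod z δ (U ω)) := by
        gcongr; exact abs_steinSol_add_sub_sub_mul_le z hω
    _ = T ω ^ 2 * steinDerivMod z δ (U ω) := by rw [← sq_abs (T ω)]; ring

/-- The projection of `t` onto the interval `[-R, R]`. -/
def clamp (R t : ℝ) : ℝ := max (-R) (min R t)

lemma monotone_clamp (R : ℝ) : Monotone (clamp R) :=
  fun _ _ h => max_le_max le_rfl (min_le_min le_rfl h)

lemma abs_clamp_le {R : ℝ} (hR : 0 ≤ R) (t : ℝ) : |clamp R t| ≤ R :=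
  abs_le.2 ⟨le_max_left _ _, max_le (neg_le_self hR) (min_le_left _ _)⟩

lemma clamp_of_abs_le {R t : ℝ} (h : |t| ≤ R) : clamp R t = t := by
  rw [clamp, min_eq_right (abs_le.1 h).2, max_eq_right (abs_le.1 h).1]

lemma continuous_clamp (R : ℝ) : Continuous (clamp R) :=
  continuous_const.max (continuous_const.min continuous_id)

lemma sq_mul_indicator_le_mul_clamp_sub {r δ t : ℝ} (ht : |t| ≤ δ) (u : ℝ) :
    t ^ 2 * (Metric.closedBall 0 (r + δ)).indicator 1 u ≤
      t * (clamp (r + 2 * δ) (u + t) - clamp (r + 2 * δ) u) := by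
  by_cases hu : u ∈ Metric.closedBall (0 : ℝ) (r + δ)
  · rw [Set.indicator_of_mem hu]
    rw [mem_closedBall_zero_iff, Real.norm_eq_abs] at hu
    have hsum := abs_add_le u t
    have ht₀ := abs_nonneg t
    rw [clamp_of_abs_le (by linarith : |u + t| ≤ r + 2 * δ), clamp_of_abs_le (by linarith),
      add_sub_cancel_left, Pi.one_apply, mul_one, sq]
  · rw [Set.indicator_of_notMem hu, mul_zero]
    rcases le_total 0 t with h | h
    · exact mul_nonneg h (sub_nonneg.2 (monotone_clamp _ (le_add_of_nonneg_right h)))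
    · exact mul_nonneg_of_nonpos_of_nonpos h
        (sub_nonpos.2 (monotone_clamp _ (add_le_of_nonpos_right h)))

lemma integral_sq_mul_prob_closedBall_le {T U : Ω → ℝ} (hindep : T ⟂ᵢ[μ] U)
    (hT : AEMeasurable T μ) {δ : ℝ} (hTδ : ∀ᵐ ω ∂μ, |T ω| ≤ δ) (hU : AEMeasurable U μ)
    {r : ℝ} (hr : 0 ≤ r) :
    (∫ ω, T ω ^ 2 ∂μ) * μ.real {ω | |U ω + T ω| ≤ r} ≤
      ∫ ω, T ω * (clamp (r + 2 * δ) (U ω + T ω) - clamp (r + 2 * δ) (U ω)) ∂μ := by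
  have hball := measurableSet_closedBall (x := (0 : ℝ)) (ε := r + δ)
  have hδ := nonneg_of_ae_abs_le hTδ
  have hsq := integrable_sq_of_ae_abs_le hT hTδ
  have hindep_sq : (fun ω => T ω ^ 2) ⟂ᵢ[μ]
      fun ω => (Metric.closedBall (0 : ℝ) (r + δ)).indicator (1 : ℝ → ℝ) (U ω) :=
    hindep.comp (measurable_id.pow_const 2) (measurable_one.indicator hball)
  have hclamp {Y : Ω → ℝ} (hY : AEMeasurable Y μ) :=
    integrable_mul_comp (integrable_of_ae_abs_le hT hTδ) hY
      (continuous_clamp (r + 2 * δ)).measurable (abs_clamp_le (by linarith))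
  have hsub : {ω | |U ω + T ω| ≤ r} ≤ᵐ[μ] U ⁻¹' Metric.closedBall 0 (r + δ) :=
    hTδ.mono fun ω hω (hr : |U ω + T ω| ≤ r) => mem_closedBall_zero_iff.2 <| by
      have := abs_add_le (U ω + T ω) (-T ω)
      rw [add_neg_cancel_right, abs_neg] at this
      exact this.trans (add_le_add hr hω)
  calc (∫ ω, T ω ^ 2 ∂μ) * μ.real {ω | |U ω + T ω| ≤ r}
      ≤ (∫ ω, T ω ^ 2 ∂μ) * μ.real (U ⁻¹' Metric.closedBall 0 (r + δ)) := by
        refine mul_le_mul_of_nonneg_left ?_ (integral_nonneg fun ω => sq_nonneg _)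
        exact ENNReal.toReal_mono (measure_ne_top _ _) (measure_mono_ae hsub)
    _ = ∫ ω, T ω ^ 2 * (Metric.closedBall 0 (r + δ)).indicator 1 (U ω) ∂μ := by
        rw [← integral_indicator_one_comp hU hball,
          hindep_sq.integral_fun_mul_eq_mul_integral hsq.1
            (integrable_indicator_one_comp hU hball).1]
    _ ≤ _ := by
        refine integral_mono_ae
          (hindep_sq.integrable_mul hsq (integrable_indicator_one_comp hU hball)) ?_
          (hTδ.mono fun ω hω => sq_mul_indicator_le_mul_clamp_sub hω (U ω))
        simpa only [mul_sub, Pi.sub_def, Pi.add_apply] using (hclamp (hU.add hT)).sub (hclamp hU)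

end SteinMethod

section BerryEsseen

variable {Ω ι : Type*} [MeasurableSpace Ω] [Fintype ι] {μ : Measure Ω} [IsProbabilityMeasure μ]
  {ξ : ι → Ω → ℝ}

omit [IsProbabilityMeasure μ] in
lemma indepFun_sum_sub_self (hind : iIndepFun ξ μ) (hξ : ∀ i, AEMeasurable (ξ i) μ) (i : ι) :
    ξ i ⟂ᵢ[μ] fun ω => ∑ j, ξ j ω - ξ i ω := by
  classical
  have h := (hind.indepFun_finsetSum_of_notMem₀ hξ (Finset.notMem_erase i Finset.univ)).symm
  convert h using 2 with ω
  rw [Finset.sum_apply, ← Finset.sum_erase_add _ _ (Finset.mem_univ i), add_sub_cancel_right]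

omit [IsProbabilityMeasure μ] in
lemma integral_sum_mul_comp_sum (hind : iIndepFun ξ μ) (hξ : ∀ i, Integrable (ξ i) μ)
    (hmean : ∀ i, ∫ ω, ξ i ω ∂μ = 0) {k : ℝ → ℝ} (hk : Measurable k) {B : ℝ}
    (hkB : ∀ t, |k t| ≤ B) :
    ∫ ω, (∑ j, ξ j ω) * k (∑ j, ξ j ω) ∂μ =
      ∑ i, ∫ ω, ξ i ω * (k (∑ j, ξ j ω) - k (∑ j, ξ j ω - ξ i ω)) ∂μ := by
  have hsum : AEMeasurable (fun ω => ∑ j, ξ j ω) μ :=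
    Finset.aemeasurable_fun_sum _ fun i _ => (hξ i).aemeasurable
  have hint (i : ι) {Y : Ω → ℝ} (hY : AEMeasurable Y μ) : Integrable (fun ω => ξ i ω * k (Y ω)) μ :=
    integrable_mul_comp (hξ i) hY hk hkB
  simp_rw [Finset.sum_mul]
  rw [integral_finsetSum _ fun i _ => hint i hsum]
  refine Finset.sum_congr rfl fun i _ => ?_
  have hrest : AEMeasurable (fun ω => ∑ j, ξ j ω - ξ i ω) μ := hsum.sub (hξ i).aemeasurable
  have hzero : ∫ ω, ξ i ω * k (∑ j, ξ j ω - ξ i ω) ∂μ = 0 := by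
    have hindep : ξ i ⟂ᵢ[μ] fun ω => k (∑ j, ξ j ω - ξ i ω) :=
      (indepFun_sum_sub_self hind (fun j => (hξ j).aemeasurable) i).comp measurable_id hk
    rw [hindep.integral_fun_mul_eq_mul_integral (hξ i).1
      (hk.comp_aemeasurable hrest).aestronglyMeasurable, hmean i, zero_mul]
  simp_rw [mul_sub]
  rw [integral_sub (hint i hsum) (hint i hrest), hzero, sub_zero]

lemma integral_sum_sq (hind : iIndepFun ξ μ) (hξ : ∀ i, MemLp (ξ i) 2 μ)
    (hmean : ∀ i, ∫ ω, ξ i ω ∂μ = 0) :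
    ∫ ω, (∑ i, ξ i ω) ^ 2 ∂μ = ∑ i, ∫ ω, ξ i ω ^ 2 ∂μ := by
  have hsum : ∫ ω, (∑ i, ξ i) ω ∂μ = 0 := by
    simp_rw [Finset.sum_apply]
    rw [integral_finsetSum _ fun i _ => (hξ i).integrable one_le_two]
    exact Finset.sum_eq_zero fun i _ => hmean i
  have hvar := IndepFun.variance_sum (s := Finset.univ) (fun i _ => hξ i)
    (fun i _ j _ hij => hind.indepFun hij)
  rw [variance_of_integral_eq_zero (memLp_finsetSum' _ fun i _ => hξ i).aemeasurable hsum] at hvar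
  simp_rw [Finset.sum_apply] at hvar
  rw [hvar]
  exact Finset.sum_congr rfl fun i _ => variance_of_integral_eq_zero (hξ i).aemeasurable (hmean i)

lemma integral_abs_le_one {W : Ω → ℝ} (hW : MemLp W 2 μ) (hsq : ∫ ω, W ω ^ 2 ∂μ = 1) :
    ∫ ω, |W ω| ∂μ ≤ 1 :=
  calc ∫ ω, |W ω| ∂μ ≤ ∫ ω, (1 + W ω ^ 2) / 2 ∂μ :=
        integral_mono (hW.integrable one_le_two).abs
          (((integrable_const 1).add hW.integrable_sq).div_const 2) fun ω => by
            have := sq_nonneg (|W ω| - 1)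
            rw [sub_sq, sq_abs] at this
            linarith
    _ = 1 := by
        rw [integral_div, integral_add (integrable_const 1) hW.integrable_sq, hsq,
          integral_const, probReal_univ]
        norm_num

variable {δ : ℝ}

lemma memLp_sum_of_ae_abs_le (hξ : ∀ i, AEMeasurable (ξ i) μ)
    (hξδ : ∀ i, ∀ᵐ ω ∂μ, |ξ i ω| ≤ δ) : MemLp (fun ω => ∑ j, ξ j ω) 2 μ :=
  memLp_finsetSum _ fun i _ => .of_bound (hξ i).aestronglyMeasurable δ (hξδ i)

lemma integral_abs_sum_le_one (hind : iIndepFun ξ μ) (hξ : ∀ i, AEMeasurable (ξ i) μ)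
    (hξδ : ∀ i, ∀ᵐ ω ∂μ, |ξ i ω| ≤ δ) (hmean : ∀ i, ∫ ω, ξ i ω ∂μ = 0)
    (hsq : ∑ i, ∫ ω, ξ i ω ^ 2 ∂μ = 1) : ∫ ω, |∑ j, ξ j ω| ∂μ ≤ 1 := by
  refine integral_abs_le_one (memLp_sum_of_ae_abs_le hξ hξδ) ?_
  rw [integral_sum_sq hind (fun i => .of_bound (hξ i).aestronglyMeasurable δ (hξδ i)) hmean, hsq]

omit [IsProbabilityMeasure μ] in
lemma integral_mul_clamp_le {W : Ω → ℝ} (hW : Integrable W μ) (hW1 : ∫ ω, |W ω| ∂μ ≤ 1) {R : ℝ}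
    (hR : 0 ≤ R) (z : ℝ) : ∫ ω, W ω * clamp R (W ω - z) ∂μ ≤ R :=
  calc ∫ ω, W ω * clamp R (W ω - z) ∂μ ≤ ∫ ω, |W ω| * R ∂μ := by
        refine integral_mono (integrable_mul_comp (g := fun t => clamp R (t - z)) hW hW.aemeasurable
          ((continuous_clamp R).measurable.comp (measurable_id.sub_const z))
          (fun t => abs_clamp_le hR (t - z))) (hW.abs.mul_const R) fun ω => ?_
        exact (le_abs_self _).trans ((abs_mul _ _).trans_le
          (mul_le_mul_of_nonneg_left (abs_clamp_le hR _) (abs_nonneg _)))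
    _ = (∫ ω, |W ω| ∂μ) * R := integral_mul_const _ _
    _ ≤ R := mul_le_of_le_one_left hR hW1

lemma prob_abs_sum_sub_le (hind : iIndepFun ξ μ) (hξ : ∀ i, AEMeasurable (ξ i) μ)
    (hξδ : ∀ i, ∀ᵐ ω ∂μ, |ξ i ω| ≤ δ) (hδ : 0 ≤ δ) (hmean : ∀ i, ∫ ω, ξ i ω ∂μ = 0)
    (hsq : ∑ i, ∫ ω, ξ i ω ^ 2 ∂μ = 1) (z : ℝ) {r : ℝ} (hr : 0 ≤ r) :
    μ.real {ω | |∑ j, ξ j ω - z| ≤ r} ≤ r + 2 * δ := by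
  have hR : 0 ≤ r + 2 * δ := by positivity
  have hW : Integrable (fun ω => ∑ j, ξ j ω) μ :=
    (memLp_sum_of_ae_abs_le hξ hξδ).integrable one_le_two
  have hclamp : Measurable fun t => clamp (r + 2 * δ) (t - z) :=
    (continuous_clamp _).measurable.comp (measurable_id.sub_const z)
  calc μ.real {ω | |∑ j, ξ j ω - z| ≤ r}
      = ∑ i, (∫ ω, ξ i ω ^ 2 ∂μ) * μ.real {ω | |∑ j, ξ j ω - z| ≤ r} := by
        rw [← Finset.sum_mul, hsq, one_mul]
    _ ≤ ∑ i, ∫ ω, ξ i ω * (clamp (r + 2 * δ) (∑ j, ξ j ω - z) -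
          clamp (r + 2 * δ) (∑ j, ξ j ω - ξ i ω - z)) ∂μ := Finset.sum_le_sum fun i _ => by
        have h := integral_sq_mul_prob_closedBall_le
          ((indepFun_sum_sub_self hind hξ i).comp measurable_id (measurable_id.sub_const z)) (hξ i)
          (hξδ i) ((hW.aemeasurable.sub (hξ i)).sub_const z) hr
        have hshift (ω : Ω) : ∑ j, ξ j ω - ξ i ω - z + ξ i ω = ∑ j, ξ j ω - z := by ring
        simpa only [Function.comp_apply, id, Pi.sub_apply, hshift] using h
    _ = ∫ ω, (∑ j, ξ j ω) * clamp (r + 2 * δ) (∑ j, ξ j ω - z) ∂μ :=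
        (integral_sum_mul_comp_sum hind (fun i => integrable_of_ae_abs_le (hξ i) (hξδ i)) hmean
          hclamp fun t => abs_clamp_le hR (t - z)).symm
    _ ≤ r + 2 * δ :=
        integral_mul_clamp_le hW (integral_abs_sum_le_one hind hξ hξδ hmean hsq) hR z

lemma steinDerivMod_sub_le {t z : ℝ} (hδ : δ ≤ 1) (ht : |t| ≤ δ) (w : ℝ) :
    steinDerivMod z δ (w - t) ≤ δ * ((stdPDF 1)⁻¹ + 2) + 2 * δ * |w| +
      (Metric.closedBall z (2 * δ)).indicator 1 w := by
  have hδ₀ : 0 ≤ δ := (abs_nonneg t).trans ht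
  have hball : (Metric.closedBall z δ).indicator (1 : ℝ → ℝ) (w - t) ≤
      (Metric.closedBall z (2 * δ)).indicator 1 w := by
    by_cases hw : w - t ∈ Metric.closedBall z δ
    · have hw' : w ∈ Metric.closedBall z (2 * δ) := by
        rw [Metric.mem_closedBall, Real.dist_eq] at hw ⊢
        have := abs_add_le (w - t - z) t
        rw [sub_right_comm, sub_add_cancel] at this
        rw [sub_right_comm] at hw
        linarith
      rw [Set.indicator_of_mem hw, Set.indicator_of_mem hw', Pi.one_apply, Pi.one_apply]
    · rw [Set.indicator_of_notMem hw]
      exact Set.indicator_nonneg (fun _ _ => zero_le_one) w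
  have habs : δ * |w - t| ≤ δ * (|w| + 1) :=
    mul_le_mul_of_nonneg_left ((abs_sub w t).trans (by linarith)) hδ₀
  rw [steinDerivMod]
  linarith

lemma integral_steinDerivMod_sum_sub_le (hind : iIndepFun ξ μ) (hξ : ∀ i, AEMeasurable (ξ i) μ)
    (hξδ : ∀ i, ∀ᵐ ω ∂μ, |ξ i ω| ≤ δ) (hmean : ∀ i, ∫ ω, ξ i ω ∂μ = 0)
    (hsq : ∑ i, ∫ ω, ξ i ω ^ 2 ∂μ = 1) (hδ : δ ≤ 1) (z : ℝ) (i : ι) :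
    ∫ ω, steinDerivMod z δ (∑ j, ξ j ω - ξ i ω) ∂μ ≤ ((stdPDF 1)⁻¹ + 8) * δ := by
  have hδ₀ := nonneg_of_ae_abs_le (hξδ i)
  have hW : Integrable (fun ω => ∑ j, ξ j ω) μ :=
    (memLp_sum_of_ae_abs_le hξ hξδ).integrable one_le_two
  have hlin : Integrable (fun ω => δ * ((stdPDF 1)⁻¹ + 2) + 2 * δ * |∑ j, ξ j ω|) μ :=
    (integrable_const _).add (hW.abs.const_mul _)
  have hball := measurableSet_closedBall (x := z) (ε := 2 * δ)
  have hind_ball := integrable_indicator_one_comp hW.aemeasurable hball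
  have hconc := prob_abs_sum_sub_le hind hξ hξδ hδ₀ hmean hsq z (r := 2 * δ) (by positivity)
  calc ∫ ω, steinDerivMod z δ (∑ j, ξ j ω - ξ i ω) ∂μ
      ≤ ∫ ω, (δ * ((stdPDF 1)⁻¹ + 2) + 2 * δ * |∑ j, ξ j ω| +
          (Metric.closedBall z (2 * δ)).indicator 1 (∑ j, ξ j ω)) ∂μ :=
        integral_mono_ae (integrable_steinDerivMod_comp
          (hW.sub (integrable_of_ae_abs_le (hξ i) (hξδ i))) z δ) (hlin.add hind_ball)
          ((hξδ i).mono fun ω hω => steinDerivMod_sub_le hδ hω _)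
    _ = δ * ((stdPDF 1)⁻¹ + 2) + 2 * δ * ∫ ω, |∑ j, ξ j ω| ∂μ +
          μ.real {ω | |∑ j, ξ j ω - z| ≤ 2 * δ} := by
        rw [integral_add hlin hind_ball, integral_add (integrable_const _) (hW.abs.const_mul _),
          integral_const, probReal_univ, one_smul, integral_const_mul,
          integral_indicator_one_comp hW.aemeasurable hball]
        rfl
    _ ≤ δ * ((stdPDF 1)⁻¹ + 2) + 2 * δ * 1 + (2 * δ + 2 * δ) := by
        gcongr
        exact integral_abs_sum_le_one hind hξ hξδ hmean hsq
    _ = ((stdPDF 1)⁻¹ + 8) * δ := by ring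

lemma integral_steinDeriv_sub_mul_steinSol {W : Ω → ℝ} (hW : Integrable W μ) (z : ℝ) :
    ∫ ω, steinDeriv z (W ω) ∂μ - ∫ ω, W ω * steinSol z (W ω) ∂μ =
      μ.real {ω | W ω < z} - stdCDF z := by
  have hmul := integrable_mul_comp hW hW.aemeasurable (continuous_steinSol z).measurable
    (abs_steinSol_le z)
  have hind := integrable_indicator_one_comp hW.aemeasurable (measurableSet_Iio (a := z))
  have hsplit : ∫ ω, steinDeriv z (W ω) ∂μ =
      ∫ ω, W ω * steinSol z (W ω) ∂μ + μ.real (W ⁻¹' Set.Iio z) - stdCDF z := by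
    rw [← integral_indicator_one_comp hW.aemeasurable measurableSet_Iio, ← integral_add hmul hind]
    refine (integral_sub (hmul.add hind) (integrable_const _)).trans ?_
    rw [integral_const, probReal_univ, one_smul]
    rfl
  rw [hsplit, add_sub_assoc, add_sub_cancel_left]
  rfl

lemma abs_sq_mul_integral_steinDeriv_sub_le {T W : Ω → ℝ}
    (hindep : T ⟂ᵢ[μ] fun ω => W ω - T ω) (hT : AEMeasurable T μ)
    (hTδ : ∀ᵐ ω ∂μ, |T ω| ≤ δ) (hW : Integrable W μ) (z : ℝ) :
    |(∫ ω, T ω ^ 2 ∂μ) * ∫ ω, steinDeriv z (W ω) ∂μ -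
        ∫ ω, T ω * (steinSol z (W ω) - steinSol z (W ω - T ω)) ∂μ| ≤
      (∫ ω, T ω ^ 2 ∂μ) * (2 * ∫ ω, steinDerivMod z δ (W ω - T ω) ∂μ) := by
  have hU : Integrable (fun ω => W ω - T ω) μ := hW.sub (integrable_of_ae_abs_le hT hTδ)
  have htaylor := abs_integral_mul_steinSol_sub_le hindep hT hTδ hU z
  have hderiv := abs_integral_steinDeriv_add_sub_le hT hTδ hU z
  simp only [sub_add_cancel] at htaylor hderiv
  have hvar : 0 ≤ ∫ ω, T ω ^ 2 ∂μ := integral_nonneg fun ω => sq_nonneg (T ω)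
  calc |(∫ ω, T ω ^ 2 ∂μ) * ∫ ω, steinDeriv z (W ω) ∂μ -
        ∫ ω, T ω * (steinSol z (W ω) - steinSol z (W ω - T ω)) ∂μ|
      ≤ |(∫ ω, T ω ^ 2 ∂μ) * ∫ ω, steinDeriv z (W ω) ∂μ -
          (∫ ω, T ω ^ 2 ∂μ) * ∫ ω, steinDeriv z (W ω - T ω) ∂μ| +
        |(∫ ω, T ω ^ 2 ∂μ) * ∫ ω, steinDeriv z (W ω - T ω) ∂μ -
          ∫ ω, T ω * (steinSol z (W ω) - steinSol z (W ω - T ω)) ∂μ| := abs_sub_le _ _ _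
    _ ≤ (∫ ω, T ω ^ 2 ∂μ) * ∫ ω, steinDerivMod z δ (W ω - T ω) ∂μ +
          (∫ ω, T ω ^ 2 ∂μ) * ∫ ω, steinDerivMod z δ (W ω - T ω) ∂μ := by
        rw [← mul_sub, abs_mul, abs_of_nonneg hvar, abs_sub_comm (_ * _) (∫ ω, T ω * _ ∂μ)]
        gcongr
    _ = (∫ ω, T ω ^ 2 ∂μ) * (2 * ∫ ω, steinDerivMod z δ (W ω - T ω) ∂μ) := by ring

theorem abs_prob_sum_lt_sub_stdCDF_le (hind : iIndepFun ξ μ) (hξ : ∀ i, AEMeasurable (ξ i) μ)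
    (hξδ : ∀ i, ∀ᵐ ω ∂μ, |ξ i ω| ≤ δ) (hmean : ∀ i, ∫ ω, ξ i ω ∂μ = 0)
    (hsq : ∑ i, ∫ ω, ξ i ω ^ 2 ∂μ = 1) (hδ : δ ≤ 1) (z : ℝ) :
    |μ.real {ω | ∑ i, ξ i ω < z} - stdCDF z| ≤ 2 * ((stdPDF 1)⁻¹ + 8) * δ := by
  have hW : Integrable (fun ω => ∑ j, ξ j ω) μ :=
    (memLp_sum_of_ae_abs_le hξ hξδ).integrable one_le_two
  have hweights (p : ℝ) : p = ∑ i, (∫ ω, ξ i ω ^ 2 ∂μ) * p := by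
    rw [← Finset.sum_mul, hsq, one_mul]
  rw [← integral_steinDeriv_sub_mul_steinSol hW z,
    integral_sum_mul_comp_sum hind (fun i => integrable_of_ae_abs_le (hξ i) (hξδ i)) hmean
      (continuous_steinSol z).measurable (abs_steinSol_le z),
    hweights (∫ ω, steinDeriv z (∑ j, ξ j ω) ∂μ), ← Finset.sum_sub_distrib,
    hweights (2 * ((stdPDF 1)⁻¹ + 8) * δ)]
  refine (Finset.abs_sum_le_sum_abs _ _).trans (Finset.sum_le_sum fun i _ => ?_)
  refine (abs_sq_mul_integral_steinDeriv_sub_le (indepFun_sum_sub_self hind hξ i) (hξ i) (hξδ i)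
    hW z).trans (mul_le_mul_of_nonneg_left ?_ (integral_nonneg fun ω => sq_nonneg _))
  rw [mul_assoc]
  exact mul_le_mul_of_nonneg_left
    (integral_steinDerivMod_sum_sub_le hind hξ hξδ hmean hsq hδ z i) zero_le_two

/-- The Berry–Esseen inequality. -/
theorem abs_prob_sum_lt_sub_stdCDF_div_le {Y : ι → Ω → ℝ} (hind : iIndepFun Y μ)
    (hY : ∀ i, AEMeasurable (Y i) μ) (hYδ : ∀ i, ∀ᵐ ω ∂μ, |Y i ω - ∫ ω, Y i ω ∂μ| ≤ δ) {s : ℝ}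
    (hs : 0 < s) (hvar : ∑ i, variance (Y i) μ = s ^ 2) (v : ℝ) :
    |μ.real {ω | ∑ i, Y i ω < v} - stdCDF ((v - ∑ i, ∫ ω, Y i ω ∂μ) / s)| ≤
      2 * ((stdPDF 1)⁻¹ + 8) * (δ / s) := by
  rcases le_or_gt δ s with hδs | hδs
  · have hint (i : ι) : Integrable (Y i) μ :=
      ((integrable_of_ae_abs_le ((hY i).sub_const _) (hYδ i)).add
        (integrable_const (∫ ω, Y i ω ∂μ))).congr (.of_forall fun ω => sub_add_cancel _ _)
    have hmean (i : ι) : ∫ ω, (Y i ω - ∫ ω, Y i ω ∂μ) / s ∂μ = 0 := by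
      rw [integral_div, integral_sub (hint i) (integrable_const _), integral_const, probReal_univ,
        one_smul, sub_self, zero_div]
    have hsq : ∑ i, ∫ ω, ((Y i ω - ∫ ω, Y i ω ∂μ) / s) ^ 2 ∂μ = 1 := by
      simp_rw [div_pow, integral_div, ← variance_eq_integral (hY _)]
      rw [← Finset.sum_div, hvar, div_self (pow_ne_zero 2 hs.ne')]
    have hbound (i : ι) : ∀ᵐ ω ∂μ, |(Y i ω - ∫ ω, Y i ω ∂μ) / s| ≤ δ / s :=
      (hYδ i).mono fun ω hω => by rw [abs_div, abs_of_pos hs]; gcongr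
    have hind' : iIndepFun (fun i ω => (Y i ω - ∫ ω, Y i ω ∂μ) / s) μ :=
      hind.comp (fun i t => (t - ∫ ω, Y i ω ∂μ) / s) fun i =>
        (measurable_id.sub_const _).div_const s
    have hevent (ω : Ω) : ∑ i, (Y i ω - ∫ ω, Y i ω ∂μ) / s < (v - ∑ i, ∫ ω, Y i ω ∂μ) / s ↔
        ∑ i, Y i ω < v := by
      rw [← Finset.sum_div, Finset.sum_sub_distrib, div_lt_div_iff_of_pos_right hs,
        sub_lt_sub_iff_right]
    simpa only [hevent] using abs_prob_sum_lt_sub_stdCDF_le hind'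
      (fun i => ((hY i).sub_const _).div_const s) hbound hmean hsq ((div_le_one hs).2 hδs)
      ((v - ∑ i, ∫ ω, Y i ω ∂μ) / s)
  · set z := (v - ∑ i, ∫ ω, Y i ω ∂μ) / s
    have hpdf := inv_pos.2 (stdPDF_pos 1)
    have hratio := (one_lt_div hs).2 hδs
    calc |μ.real {ω | ∑ i, Y i ω < v} - stdCDF z|
        ≤ 1 := abs_sub_le_of_nonneg_of_le measureReal_nonneg measureReal_le_one
          (stdCDF_nonneg z) (stdCDF_le_one z)
      _ ≤ 2 * ((stdPDF 1)⁻¹ + 8) * (δ / s) := by nlinarith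

end BerryEsseen

section FiniteAlphabet

variable {A : Type*} [Fintype A] {P : A → ℝ}

lemma IsDist.expect_const (hP : IsDist P) (c : ℝ) : expect P (fun _ => c) = c := by
  rw [expect, ← Finset.sum_mul, hP.2, one_mul]

lemma IsDist.varD_nonneg (hP : IsDist P) (f : A → ℝ) : 0 ≤ varD P f :=
  Finset.sum_nonneg fun a _ => mul_nonneg (hP.1 a) (sq_nonneg _)

/-- A real-valued probability mass function as a `PMF`, giving access to its measure. -/
noncomputable def IsDist.toPMF (hP : IsDist P) : PMF A :=
  .ofFintype (fun a => ENNReal.ofReal (P a)) <| by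
    rw [← ENNReal.ofReal_sum_of_nonneg fun a _ => hP.1 a, hP.2, ENNReal.ofReal_one]

lemma IsDist.toReal_toPMF_apply (hP : IsDist P) (a : A) : (hP.toPMF a).toReal = P a :=
  ENNReal.toReal_ofReal (hP.1 a)

section Measurable

variable [MeasurableSpace A] [MeasurableSingletonClass A]

lemma IsDist.integral_toPMF (hP : IsDist P) (f : A → ℝ) :
    ∫ a, f a ∂hP.toPMF.toMeasure = expect P f := by
  simp_rw [PMF.integral_eq_sum, hP.toReal_toPMF_apply, smul_eq_mul, expect]

lemma IsDist.variance_toPMF (hP : IsDist P) (f : A → ℝ) :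
    variance f hP.toPMF.toMeasure = varD P f := by
  rw [variance_eq_integral AEMeasurable.of_discrete, hP.integral_toPMF, hP.integral_toPMF, varD]

lemma measureReal_pi_toPMF {ι : Type*} [Fintype ι] [DecidableEq ι] {P : ι → A → ℝ}
    (hP : ∀ i, IsDist (P i)) (p : (ι → A) → Prop) [DecidablePred p] :
    (Measure.pi fun i => (hP i).toPMF.toMeasure).real {ω | p ω} =
      ∑ ω, if p ω then ∏ i, P i (ω i) else 0 := by
  rw [← Finset.sum_filter, ← Finset.coe_filter_univ, ← sum_measureReal_singleton]
  refine Finset.sum_congr rfl fun ω _ => ?_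
  simp_rw [measureReal_def, Measure.pi_singleton, ENNReal.toReal_prod,
    PMF.toMeasure_apply_singleton _ _ (measurableSet_singleton _), IsDist.toReal_toPMF_apply]

end Measurable

lemma abs_sum_prod_sub_stdCDF_le {ι : Type*} [Fintype ι] [DecidableEq ι] {P f : ι → A → ℝ}
    (hP : ∀ i, IsDist (P i)) {δ : ℝ} (hδ : ∀ i a, |f i a - expect (P i) (f i)| ≤ δ) {s : ℝ}
    (hs : 0 < s) (hvar : ∑ i, varD (P i) (f i) = s ^ 2) (v : ℝ) :
    |(∑ ω : ι → A, if ∑ i, f i (ω i) < v then ∏ i, P i (ω i) else 0) -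
        stdCDF ((v - ∑ i, expect (P i) (f i)) / s)| ≤ 2 * ((stdPDF 1)⁻¹ + 8) * (δ / s) := by
  let _ : MeasurableSpace A := ⊤
  have : DiscreteMeasurableSpace A := ⟨fun _ => trivial⟩
  set μ := Measure.pi fun i => (hP i).toPMF.toMeasure with hμ
  have hmean (i : ι) : ∫ ω, f i (ω i) ∂μ = expect (P i) (f i) := by
    rw [hμ, integral_comp_eval AEMeasurable.of_discrete.aestronglyMeasurable,
      (hP i).integral_toPMF]
  have hvar' (i : ι) : variance (fun ω => f i (ω i)) μ = varD (P i) (f i) := by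
    rw [← (hP i).variance_toPMF]
    exact (measurePreserving_eval _ i).variance_fun_comp AEMeasurable.of_discrete
  have hBE := abs_prob_sum_lt_sub_stdCDF_div_le (μ := μ) (δ := δ) (Y := fun i ω => f i (ω i))
    (iIndepFun_pi fun i => AEMeasurable.of_discrete) (fun i => AEMeasurable.of_discrete)
    (fun i => .of_forall fun ω => by rw [hmean i]; exact hδ i (ω i)) hs
    (by simp_rw [hvar', hvar]) v
  simp_rw [hmean] at hBE
  rwa [hμ, measureReal_pi_toPMF hP] at hBE

/-- The probability that `∑ f₁(Xᵢ) + ∑ f₂(Yⱼ) < v` for independent i.i.d. samples `X` of length `N`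
from `P1` and `Y` of length `n` from `P2`. -/
noncomputable def sumCDF (P1 P2 f1 f2 : A → ℝ) (N n : ℕ) (v : ℝ) : ℝ :=
  ∑ x : Fin N → A, ∑ y : Fin n → A,
    if ∑ i, f1 (x i) + ∑ j, f2 (y j) < v then seqProb P1 x * seqProb P2 y else 0

variable {P1 P2 : A → ℝ} {f1 f2 : A → ℝ}

lemma abs_sumCDF_sub_stdCDF_le (h1 : IsDist P1) (h2 : IsDist P2) {δ : ℝ}
    (hδ1 : ∀ a, |f1 a - expect P1 f1| ≤ δ) (hδ2 : ∀ a, |f2 a - expect P2 f2| ≤ δ) {N n : ℕ} {s : ℝ}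
    (hs : 0 < s) (hvar : N * varD P1 f1 + n * varD P2 f2 = s ^ 2) (v : ℝ) :
    |sumCDF P1 P2 f1 f2 N n v - stdCDF ((v - (N * expect P1 f1 + n * expect P2 f2)) / s)| ≤
      2 * ((stdPDF 1)⁻¹ + 8) * (δ / s) := by
  have hBE := abs_sum_prod_sub_stdCDF_le (ι := Fin N ⊕ Fin n)
    (P := Sum.elim (fun _ => P1) fun _ => P2) (f := Sum.elim (fun _ => f1) fun _ => f2)
    (Sum.forall.2 ⟨fun _ => h1, fun _ => h2⟩) (Sum.forall.2 ⟨fun _ => hδ1, fun _ => hδ2⟩) hs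
    (by simpa using hvar) v
  have hcurry : sumCDF P1 P2 f1 f2 N n v = ∑ ω : Fin N ⊕ Fin n → A,
      if ∑ i, Sum.elim (fun _ => f1) (fun _ => f2) i (ω i) < v then
        ∏ i, Sum.elim (fun _ => P1) (fun _ => P2) i (ω i) else 0 := by
    rw [sumCDF, ← Fintype.sum_prod_type']
    refine (Fintype.sum_equiv (Equiv.sumArrowEquivProdArrow _ _ _) _ _ fun ω => ?_).symm
    simp only [Fintype.sum_sum_type, Fintype.prod_sum_type, Sum.elim_inl, Sum.elim_inr]
    rfl
  rw [hcurry]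
  simpa using hBE

lemma abs_standardize_sub_le {r s q m g e : ℝ} (hr : 0 < r) (hrs : r ≤ s) (hsq : s ≤ r + q)
    (hmg : |m - g| ≤ e) (t : ℝ) : |(g + r * t - m) / s - t| ≤ (e + q * |t|) / r := by
  have hs : 0 < s := hr.trans_le hrs
  have hnum : |g + r * t - m - t * s| ≤ e + q * |t| :=
    calc |g + r * t - m - t * s| = |(g - m) + (r - s) * t| := by ring_nf
      _ ≤ |m - g| + |s - r| * |t| := by
          rw [abs_sub_comm m, abs_sub_comm s, ← abs_mul]; exact abs_add_le _ _
      _ ≤ e + q * |t| := by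
          rw [abs_of_nonneg (sub_nonneg.2 hrs)]
          gcongr
          linarith
  rw [div_sub' hs.ne', mul_comm s, abs_div, abs_of_pos hs]
  exact div_le_div₀ ((abs_nonneg _).trans hnum) hnum hr hrs

lemma mul_le_trainLen (α : ℝ) (n : ℕ) : α * n ≤ trainLen α n := Nat.le_ceil _

lemma trainLen_le {α : ℝ} (hα : 0 ≤ α) (n : ℕ) : trainLen α n ≤ α * n + 1 :=
  (Nat.ceil_lt_add_one (by positivity)).le

lemma abs_trainLen_mul_add_sub_le {α : ℝ} (hα : 0 ≤ α) (n : ℕ) (a b : ℝ) :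
    |trainLen α n * a + n * b - n * (α * a + b)| ≤ |a| := by
  have hlo := mul_le_trainLen α n
  have hhi := trainLen_le hα n
  calc |trainLen α n * a + n * b - n * (α * a + b)| = |(trainLen α n - α * n) * a| := by ring_nf
    _ = (trainLen α n - α * n) * |a| := by rw [abs_mul, abs_of_nonneg (sub_nonneg.2 hlo)]
    _ ≤ |a| := mul_le_of_le_one_left (abs_nonneg a) (by linarith)

lemma sqrt_add_le_add_sqrt {a b : ℝ} (ha : 0 ≤ a) (hb : 0 ≤ b) : √(a + b) ≤ √a + √b := by
  refine Real.sqrt_le_iff.2 ⟨by positivity, ?_⟩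
  rw [add_sq, Real.sq_sqrt ha, Real.sq_sqrt hb]
  linarith [mul_nonneg (Real.sqrt_nonneg a) (Real.sqrt_nonneg b)]

lemma sqrt_trainLen_mul_add_mem_Icc {α : ℝ} (hα : 0 ≤ α) (n : ℕ) {a b : ℝ} (ha : 0 ≤ a)
    (hb : 0 ≤ b) : √(trainLen α n * a + n * b) ∈
      Set.Icc √(n * (α * a + b)) (√(n * (α * a + b)) + √a) := by
  constructor
  · refine Real.sqrt_le_sqrt ?_
    linarith [mul_le_mul_of_nonneg_right (mul_le_trainLen α n) ha]
  · refine (Real.sqrt_le_sqrt ?_).trans (sqrt_add_le_add_sqrt (by positivity) ha)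
    linarith [(abs_le.1 (abs_trainLen_mul_add_sub_le hα n a b)).2, abs_of_nonneg ha]

lemma abs_sumCDF_trainLen_sub_stdCDF_le (h1 : IsDist P1) (h2 : IsDist P2) {δ : ℝ}
    (hδ1 : ∀ a, |f1 a - expect P1 f1| ≤ δ) (hδ2 : ∀ a, |f2 a - expect P2 f2| ≤ δ) (hδ : 0 ≤ δ)
    {α : ℝ} (hα : 0 ≤ α) (hV : 0 < α * varD P1 f1 + varD P2 f2) {n : ℕ} (hn : 0 < n) (t : ℝ) :
    |sumCDF P1 P2 f1 f2 (trainLen α n) n (n * (α * expect P1 f1 + expect P2 f2) +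
        √(n * (α * varD P1 f1 + varD P2 f2)) * t) - stdCDF t| ≤
      (2 * ((stdPDF 1)⁻¹ + 8) * δ + |expect P1 f1| + √(varD P1 f1)) * (1 + |t|) /
        √(n * (α * varD P1 f1 + varD P2 f2)) := by
  set r := √(n * (α * varD P1 f1 + varD P2 f2))
  set g := n * (α * expect P1 f1 + expect P2 f2)
  set m := trainLen α n * expect P1 f1 + n * expect P2 f2
  set s := √(trainLen α n * varD P1 f1 + n * varD P2 f2)
  have hvar1 := h1.varD_nonneg f1
  have hvar2 := h2.varD_nonneg f2
  have hr : 0 < r := Real.sqrt_pos.2 (by positivity)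
  obtain ⟨hrs, hsr⟩ : s ∈ Set.Icc r (r + √(varD P1 f1)) :=
    sqrt_trainLen_mul_add_mem_Icc hα n hvar1 hvar2
  have hc : 0 ≤ 2 * ((stdPDF 1)⁻¹ + 8) := by have := stdPDF_pos 1; positivity
  have hBE : |sumCDF P1 P2 f1 f2 (trainLen α n) n (g + r * t) - stdCDF ((g + r * t - m) / s)| ≤
      2 * ((stdPDF 1)⁻¹ + 8) * (δ / r) :=
    (abs_sumCDF_sub_stdCDF_le h1 h2 hδ1 hδ2 (hr.trans_le hrs)
      (Real.sq_sqrt (by positivity)).symm _).trans (by gcongr)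
  have hshift : |stdCDF ((g + r * t - m) / s) - stdCDF t| ≤
      (|expect P1 f1| + √(varD P1 f1) * |t|) / r :=
    (abs_stdCDF_sub_le _ _).trans
      (abs_standardize_sub_le hr hrs hsr (abs_trainLen_mul_add_sub_le hα n _ _) t)
  refine (abs_sub_le _ _ _).trans ((add_le_add hBE hshift).trans ?_)
  rw [mul_div_assoc', ← add_div]
  gcongr
  have hgrow : 0 ≤ (2 * ((stdPDF 1)⁻¹ + 8) * δ + |expect P1 f1|) * |t| := by positivity
  linarith [Real.sqrt_nonneg (varD P1 f1)]

lemma exists_abs_sumCDF_trainLen_sub_stdCDF_le (h1 : IsDist P1) (h2 : IsDist P2) {α : ℝ}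
    (hα : 0 ≤ α) (hV : 0 < α * varD P1 f1 + varD P2 f2) :
    ∃ B, 0 ≤ B ∧ ∀ n : ℕ, 0 < n → ∀ t : ℝ,
      |sumCDF P1 P2 f1 f2 (trainLen α n) n (n * (α * expect P1 f1 + expect P2 f2) +
          √(n * (α * varD P1 f1 + varD P2 f2)) * t) - stdCDF t| ≤ B * (1 + |t|) / √n := by
  set δ := ∑ a, (|f1 a - expect P1 f1| + |f2 a - expect P2 f2|)
  have hδ (a : A) : |f1 a - expect P1 f1| + |f2 a - expect P2 f2| ≤ δ :=
    Finset.single_le_sum (f := fun a => |f1 a - expect P1 f1| + |f2 a - expect P2 f2|)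
      (fun a _ => by positivity) (Finset.mem_univ a)
  have hδ₀ : 0 ≤ δ := Finset.sum_nonneg fun a _ => by positivity
  have hpdf := stdPDF_pos 1
  refine ⟨(2 * ((stdPDF 1)⁻¹ + 8) * δ + |expect P1 f1| + √(varD P1 f1)) /
    √(α * varD P1 f1 + varD P2 f2), by positivity, fun n hn t => ?_⟩
  refine (abs_sumCDF_trainLen_sub_stdCDF_le h1 h2 (fun a => (le_add_of_nonneg_right
    (abs_nonneg _)).trans (hδ a)) (fun a => (le_add_of_nonneg_left (abs_nonneg _)).trans (hδ a))
    hδ₀ hα hV hn t).trans_eq ?_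
  rw [Real.sqrt_mul n.cast_nonneg, div_mul_eq_mul_div, div_div, mul_comm √(n : ℝ)]

end FiniteAlphabet

section GaussianQuantile

lemma stdPDF_mul_le_stdCDF_add_sub (t : ℝ) {η : ℝ} (h₀ : 0 ≤ η) (h₁ : η ≤ 1) :
    stdPDF (|t| + 1) * η ≤ stdCDF (t + η) - stdCDF t := by
  have h := mul_sub_le_stdCDF_sub (r := |t| + 1) (by linarith [neg_abs_le t])
    (le_add_of_nonneg_right h₀ : t ≤ t + η) (by linarith [le_abs_self t])
  rwa [add_sub_cancel_left] at h

lemma stdPDF_mul_le_stdCDF_sub_sub (t : ℝ) {η : ℝ} (h₀ : 0 ≤ η) (h₁ : η ≤ 1) :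
    stdPDF (|t| + 1) * η ≤ stdCDF t - stdCDF (t - η) := by
  have h := mul_sub_le_stdCDF_sub (r := |t| + 1) (by linarith [neg_abs_le t])
    (sub_le_self t h₀) (by linarith [le_abs_self t])
  rwa [sub_sub_cancel] at h

lemma quantile_bracket_of_abs_sub_stdCDF_le {f : ℝ → ℝ} {t b d η : ℝ}
    (hf : ∀ u, |u| ≤ |t| + 1 → |f u - stdCDF u| ≤ b) (h₀ : 0 ≤ η) (h₁ : η ≤ 1)
    (hη : stdPDF (|t| + 1) * η = b + d) :
    f (t - η) ≤ stdCDF t - d ∧ stdCDF t + d ≤ f (t + η) := by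
  have habs := abs_of_nonneg h₀
  have hdown := (abs_le.1 (hf (t - η) ((abs_sub _ _).trans (by linarith)))).2
  have hup := (abs_le.1 (hf (t + η) ((abs_add_le _ _).trans (by linarith)))).1
  have hslope_down := stdPDF_mul_le_stdCDF_sub_sub t h₀ h₁
  have hslope_up := stdPDF_mul_le_stdCDF_add_sub t h₀ h₁
  constructor <;> linarith

/-- Since `stdCDF` has positive slope at its `p`-quantile, moving the threshold by a constant
(that is, `t` by `H / √n`) beats the `O(1 / √n)` error of the normal approximation. -/
lemma exists_eventually_quantile_bracket {F : ℕ → ℝ → ℝ} {g V B : ℝ} (hB : 0 ≤ B)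
    (hF : ∀ n : ℕ, 0 < n → ∀ t, |F n (n * g + √(n * V) * t) - stdCDF t| ≤ B * (1 + |t|) / √n)
    {p : ℝ} (hp : p ∈ Set.Ioo 0 1) :
    ∃ K, ∀ᶠ n : ℕ in atTop, F n (n * g + √(n * V) * stdCDFInv p - K) ≤ p ∧
      p + 1 / √n ≤ F n (n * g + √(n * V) * stdCDFInv p + K) := by
  set t := stdCDFInv p with ht
  set c := stdPDF (|t| + 1)
  set H := (B * (2 + |t|) + 1) / c with hH
  have hcpos : 0 < c := stdPDF_pos _
  refine ⟨√V * H, ?_⟩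
  filter_upwards [eventually_gt_atTop 0, eventually_ge_atTop ⌈H ^ 2⌉₊] with n hn hnH
  have hsqrt : 0 < √(n : ℝ) := Real.sqrt_pos.2 (by exact_mod_cast hn)
  have hstep : √(n * V) * (H / √n) = √V * H := by
    rw [Real.sqrt_mul n.cast_nonneg]
    field_simp
  have hslope : c * (H / √n) = B * (2 + |t|) / √n + 1 / √n := by
    rw [← add_div, mul_div_assoc', hH, mul_div_cancel₀ _ hcpos.ne']
  obtain ⟨hdown, hup⟩ := quantile_bracket_of_abs_sub_stdCDF_le
    (f := fun u => F n (n * g + √(n * V) * u))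
    (fun u hu => (hF n hn u).trans (by gcongr ?_ * ?_ / _; linarith)) (by positivity)
    ((div_le_one hsqrt).2 (Real.le_sqrt_of_sq_le (Nat.ceil_le.1 hnH))) hslope
  rw [ht, stdCDF_stdCDFInv hp, ← ht] at hdown hup
  rw [mul_sub, hstep, ← add_sub_assoc] at hdown
  rw [mul_add, hstep, ← add_assoc] at hup
  exact ⟨hdown.trans (sub_le_self p (by positivity)), hup⟩

end GaussianQuantile

section LikelihoodRatio

variable {A : Type*} [Fintype A] {P1 P2 Q1 Q2 M r1 r2 : A → ℝ} {α : ℝ} {n : ℕ}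

lemma seqProb_nonneg {A : Type*} {P : A → ℝ} (hP : ∀ a, 0 ≤ P a) {m : ℕ} (x : Fin m → A) :
    0 ≤ seqProb P x :=
  Finset.prod_nonneg fun i _ => hP (x i)

lemma seqProb_mul {A : Type*} (P Q : A → ℝ) {m : ℕ} (x : Fin m → A) :
    seqProb (P * Q) x = seqProb P x * seqProb Q x :=
  Finset.prod_mul_distrib

lemma seqProb_eq_exp_sum_log {A : Type*} {r : A → ℝ} {m : ℕ} {x : Fin m → A}
    (hr : ∀ i, 0 < r (x i)) : seqProb r x = Real.exp (∑ i, Real.log (r (x i))) := by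
  simp_rw [seqProb, Real.exp_sum, Real.exp_log (hr _)]

lemma sum_seqProb (P : A → ℝ) (m : ℕ) : ∑ x : Fin m → A, seqProb P x = (∑ a, P a) ^ m := by
  simp_rw [seqProb, Fintype.sum_pow]

lemma IsDist.sum_seqProb_eq_one (hP1 : IsDist P1) (m : ℕ) : ∑ x : Fin m → A, seqProb P1 x = 1 := by
  rw [sum_seqProb, hP1.2, one_pow]

lemma IsDist.sum_sum_sum_seqProb_mul (hP2 : IsDist P2) {m : ℕ} {β γ : Type*} [Fintype β]
    [Fintype γ] (F : β → γ → ℝ) :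
    ∑ b, ∑ x : Fin m → A, ∑ c, seqProb P2 x * F b c = ∑ b, ∑ c, F b c := by
  simp_rw [← Finset.mul_sum, ← Finset.sum_mul, hP2.sum_seqProb_eq_one, one_mul]

lemma beta1_le_one (φ : BTest A α n) (hQ1 : IsDist Q1) (hQ2 : IsDist Q2) : beta1 φ Q1 Q2 ≤ 1 := by
  calc beta1 φ Q1 Q2
      ≤ ∑ x1, ∑ x2 : Fin (trainLen α n) → A, ∑ y,
          seqProb Q2 x2 * (seqProb Q1 x1 * seqProb Q1 y) := by
        refine Finset.sum_le_sum fun x1 _ => Finset.sum_le_sum fun x2 _ =>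
          Finset.sum_le_sum fun y _ => ?_
        have h₁ := seqProb_nonneg hQ1.1 x1
        have h₂ := seqProb_nonneg hQ2.1 x2
        have h₃ := seqProb_nonneg hQ1.1 y
        split_ifs
        · exact le_of_eq (by ring)
        · positivity
    _ = 1 := by
        rw [hQ2.sum_sum_sum_seqProb_mul]
        simp_rw [← Finset.mul_sum, hQ1.sum_seqProb_eq_one, mul_one, hQ1.sum_seqProb_eq_one]

lemma sumCDF_monotone {f1 f2 : A → ℝ} (hP1 : IsDist P1) (hP2 : IsDist P2) (N n : ℕ) :
    Monotone (sumCDF P1 P2 f1 f2 N n) := by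
  intro v w hvw
  refine Finset.sum_le_sum fun x _ => Finset.sum_le_sum fun y _ => ?_
  have hnonneg := mul_nonneg (seqProb_nonneg hP1.1 x) (seqProb_nonneg hP2.1 y)
  split_ifs with hv hw
  exacts [le_rfl, absurd (hv.trans_le hvw) hw, hnonneg, le_rfl]

/-- Sequences containing a letter with `r = 0`, where `log r` is the junk value `0`, do not
contribute: they have probability zero. -/
lemma sumCDF_log (hr1 : ∀ a, 0 ≤ r1 a) (hr2 : ∀ a, 0 ≤ r2 a) (N n : ℕ) (v : ℝ) :
    sumCDF (r1 * M) (r2 * M) (fun a => Real.log (r1 a)) (fun a => Real.log (r2 a)) N n v =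
      ∑ x : Fin N → A, ∑ y : Fin n → A, if seqProb r1 x * seqProb r2 y < Real.exp v then
        seqProb (r1 * M) x * seqProb (r2 * M) y else 0 := by
  refine Finset.sum_congr rfl fun x _ => Finset.sum_congr rfl fun y _ => ?_
  by_cases hzero : seqProb r1 x * seqProb r2 y = 0
  · have hprob : seqProb (r1 * M) x * seqProb (r2 * M) y = 0 := by
      rw [seqProb_mul, seqProb_mul, mul_mul_mul_comm, hzero, zero_mul]
    simp only [hprob, ite_self]
  · obtain ⟨hx, hy⟩ := mul_ne_zero_iff.1 hzero
    rw [seqProb, Finset.prod_ne_zero_iff] at hx hy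
    rw [seqProb_eq_exp_sum_log fun i => (hr1 _).lt_of_ne' (hx i (Finset.mem_univ i)),
      seqProb_eq_exp_sum_log fun j => (hr2 _).lt_of_ne' (hy j (Finset.mem_univ j)),
      ← Real.exp_add]
    simp only [Real.exp_lt_exp]

lemma sumCDF_log_le_beta2_add_exp_mul_beta1 (hM : ∀ a, 0 ≤ M a) (hr1 : ∀ a, 0 ≤ r1 a)
    (hr2 : ∀ a, 0 ≤ r2 a) (hP2 : IsDist (r2 * M)) (φ : BTest A α n) (v : ℝ) :
    sumCDF (r1 * M) (r2 * M) (fun a => Real.log (r1 a)) (fun a => Real.log (r2 a))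
        (trainLen α n) n v ≤
      beta2 φ (r1 * M) (r2 * M) + Real.exp v * beta1 φ M (r2 * M) := by
  rw [sumCDF_log hr1 hr2, ← hP2.sum_sum_sum_seqProb_mul (m := trainLen α n), beta1, beta2]
  simp_rw [Finset.mul_sum, ← Finset.sum_add_distrib]
  refine Finset.sum_le_sum fun x1 _ => Finset.sum_le_sum fun x2 _ => Finset.sum_le_sum fun y _ => ?_
  have h₁ := seqProb_nonneg (fun a => mul_nonneg (hr1 a) (hM a)) x1
  have h₂ := seqProb_nonneg hP2.1 x2
  have hy := seqProb_nonneg hP2.1 y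
  have hM₁ := seqProb_nonneg hM x1
  have hMy := seqProb_nonneg hM y
  have hchange : seqProb (r1 * M) x1 * seqProb (r2 * M) y =
      seqProb r1 x1 * seqProb r2 y * (seqProb M x1 * seqProb M y) := by
    rw [seqProb_mul, seqProb_mul, mul_mul_mul_comm]
  cases φ x1 x2 y
  · simp only [Bool.false_eq_true, if_true, if_false, mul_zero, add_zero]
    split_ifs
    · exact le_of_eq (by ring)
    · rw [mul_zero]
      positivity
  · simp only [Bool.true_eq_false, if_true, if_false, zero_add]
    split_ifs with hlt
    · calc seqProb (r2 * M) x2 * (seqProb (r1 * M) x1 * seqProb (r2 * M) y)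
          ≤ seqProb (r2 * M) x2 * (Real.exp v * (seqProb M x1 * seqProb M y)) := by
            rw [hchange]
            gcongr
        _ = Real.exp v * (seqProb M x1 * seqProb (r2 * M) x2 * seqProb M y) := by ring
    · rw [mul_zero]
      positivity

open Classical in
/-- The likelihood ratio test: declare `H₂` iff `∏ r₁(x₁ᵢ) ∏ r₂(yⱼ) ≥ exp v`. It ignores the second
training sequence. -/
noncomputable def likelihoodTest (r1 r2 : A → ℝ) (α : ℝ) (n : ℕ) (v : ℝ) : BTest A α n :=
  fun x1 _ y => decide (Real.exp v ≤ seqProb r1 x1 * seqProb r2 y)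

lemma beta2_likelihoodTest (hr1 : ∀ a, 0 ≤ r1 a) (hr2 : ∀ a, 0 ≤ r2 a) (hP2 : IsDist (r2 * M))
    (v : ℝ) : beta2 (likelihoodTest r1 r2 α n v) (r1 * M) (r2 * M) =
      sumCDF (r1 * M) (r2 * M) (fun a => Real.log (r1 a)) (fun a => Real.log (r2 a))
        (trainLen α n) n v := by
  rw [sumCDF_log hr1 hr2, ← hP2.sum_sum_sum_seqProb_mul (m := trainLen α n), beta2]
  simp only [likelihoodTest, decide_eq_false_iff_not, not_le, mul_ite, mul_zero, mul_assoc,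
    mul_left_comm (seqProb (r2 * M) _) (seqProb (r1 * M) _)]

lemma beta1_likelihoodTest_le (hQ1 : IsDist Q1) (hQ2 : IsDist Q2) (hr1 : ∀ a, 0 ≤ r1 a)
    (hr2 : ∀ a, 0 ≤ r2 a) (v : ℝ) : beta1 (likelihoodTest r1 r2 α n v) Q1 Q2 ≤
      Real.exp (-v) * (expect Q1 r1 ^ trainLen α n * expect Q1 r2 ^ n) := by
  calc beta1 (likelihoodTest r1 r2 α n v) Q1 Q2
      ≤ ∑ x1, ∑ x2 : Fin (trainLen α n) → A, ∑ y, seqProb Q2 x2 *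
          (Real.exp (-v) * (seqProb (Q1 * r1) x1 * seqProb (Q1 * r2) y)) := by
        refine Finset.sum_le_sum fun x1 _ => Finset.sum_le_sum fun x2 _ =>
          Finset.sum_le_sum fun y _ => ?_
        have h₁ := seqProb_nonneg hQ1.1 x1
        have h₂ := seqProb_nonneg hQ2.1 x2
        have hy := seqProb_nonneg hQ1.1 y
        have hr₁ := seqProb_nonneg hr1 x1
        have hr₂ := seqProb_nonneg hr2 y
        rw [seqProb_mul, seqProb_mul]
        split_ifs with hdecide
        · have hmarkov : 1 ≤ Real.exp (-v) * (seqProb r1 x1 * seqProb r2 y) := by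
            rw [Real.exp_neg, ← div_eq_inv_mul, one_le_div (Real.exp_pos v)]
            exact of_decide_eq_true hdecide
          calc seqProb Q1 x1 * seqProb Q2 x2 * seqProb Q1 y
              ≤ seqProb Q1 x1 * seqProb Q2 x2 * seqProb Q1 y *
                  (Real.exp (-v) * (seqProb r1 x1 * seqProb r2 y)) :=
                le_mul_of_one_le_right (by positivity) hmarkov
            _ = _ := by ring
        · positivity
    _ = Real.exp (-v) * (expect Q1 r1 ^ trainLen α n * expect Q1 r2 ^ n) := by
        rw [hQ2.sum_sum_sum_seqProb_mul]
        simp_rw [← Finset.mul_sum, ← Finset.sum_mul, sum_seqProb]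
        rfl

end LikelihoodRatio

section Mixture

lemma pow_le_exp_mul_sub_one {a : ℝ} (ha : 0 ≤ a) (k : ℕ) : a ^ k ≤ Real.exp (k * (a - 1)) := by
  rw [Real.exp_nat_mul]
  exact pow_le_pow_left₀ ha (by linarith [Real.add_one_le_exp (a - 1)]) k

lemma pow_trainLen_mul_pow_le {α a b : ℝ} (hα : 0 < α) (ha : 0 ≤ a) (hb : 0 ≤ b)
    (hab : α * a + b ≤ 1 + α) (n : ℕ) : a ^ trainLen α n * b ^ n ≤ Real.exp ((1 + α) / α) := by
  have hround : (trainLen α n - α * n) * (a - 1) ≤ (1 + α) / α := by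
    have ha' : a ≤ (1 + α) / α := by rw [le_div_iff₀ hα]; linarith
    nlinarith [mul_le_trainLen α n, trainLen_le hα.le n]
  calc a ^ trainLen α n * b ^ n
      ≤ Real.exp (trainLen α n * (a - 1)) * Real.exp (n * (b - 1)) := by
        gcongr <;> exact pow_le_exp_mul_sub_one ‹_› _
    _ = Real.exp ((trainLen α n - α * n) * (a - 1) + n * (α * a + b - (1 + α))) := by
        rw [← Real.exp_add]
        ring_nf
    _ ≤ Real.exp ((1 + α) / α) := by
        have hslack : n * (α * a + b - (1 + α)) ≤ 0 :=
          mul_nonpos_of_nonneg_of_nonpos n.cast_nonneg (sub_nonpos.2 hab)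
        exact Real.exp_le_exp.2 (by linarith)

variable {A : Type*} {P1 P2 : A → ℝ} {α : ℝ}

/-- The density of `P` with respect to `mix P1 P2 α` (with the junk value `0` where the mixture
vanishes). The information densities are the logarithms of the cases `P = P1` and `P = P2`. -/
noncomputable def mixDensity (P1 P2 : A → ℝ) (α : ℝ) (P : A → ℝ) (a : A) : ℝ :=
  (1 + α) * P a / (α * P1 a + P2 a)

lemma mixDensity_nonneg (hα : 0 ≤ α) (h1 : ∀ a, 0 ≤ P1 a) (h2 : ∀ a, 0 ≤ P2 a) {P : A → ℝ}
    (hP : ∀ a, 0 ≤ P a) (a : A) : 0 ≤ mixDensity P1 P2 α P a := by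
  have := h1 a
  have := h2 a
  have := hP a
  unfold mixDensity
  positivity

lemma mixDensity_mul_mix {P : A → ℝ} (hα : 1 + α ≠ 0)
    (hP : ∀ a, α * P1 a + P2 a = 0 → P a = 0) : mixDensity P1 P2 α P * mix P1 P2 α = P := by
  funext a
  rw [Pi.mul_apply, mixDensity, mix]
  by_cases hzero : α * P1 a + P2 a = 0
  · rw [hzero, hP a hzero, zero_div, mul_zero]
  · field_simp

lemma mul_mixDensity_add_mixDensity_le (hα : 0 ≤ 1 + α) (a : A) :
    α * mixDensity P1 P2 α P1 a + mixDensity P1 P2 α P2 a ≤ 1 + α :=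
  calc α * mixDensity P1 P2 α P1 a + mixDensity P1 P2 α P2 a
      = (1 + α) * ((α * P1 a + P2 a) / (α * P1 a + P2 a)) := by unfold mixDensity; ring
    _ ≤ 1 + α := mul_le_of_le_one_right hα (div_self_le_one _)

lemma mixDensity_left_mul_mix (hα : 0 < α) (h1 : ∀ a, 0 ≤ P1 a) (h2 : ∀ a, 0 ≤ P2 a) :
    mixDensity P1 P2 α P1 * mix P1 P2 α = P1 :=
  mixDensity_mul_mix (by positivity) fun a ha =>
    ((mul_eq_zero_iff_left hα.ne').1
      ((add_eq_zero_iff_of_nonneg (mul_nonneg hα.le (h1 a)) (h2 a)).1 ha).1)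

lemma mixDensity_right_mul_mix (hα : 0 ≤ α) (h1 : ∀ a, 0 ≤ P1 a) (h2 : ∀ a, 0 ≤ P2 a) :
    mixDensity P1 P2 α P2 * mix P1 P2 α = P2 :=
  mixDensity_mul_mix (by positivity) fun a ha =>
    ((add_eq_zero_iff_of_nonneg (mul_nonneg hα (h1 a)) (h2 a)).1 ha).2

variable [Fintype A]

lemma isDist_mix (hα : 0 ≤ α) (h1 : IsDist P1) (h2 : IsDist P2) : IsDist (mix P1 P2 α) := by
  refine ⟨fun a => div_nonneg (add_nonneg (mul_nonneg hα (h1.1 a)) (h2.1 a)) (by positivity), ?_⟩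
  simp_rw [mix]
  rw [← Finset.sum_div, Finset.sum_add_distrib, ← Finset.mul_sum, h1.2, h2.2, mul_one, add_comm,
    div_self (by positivity)]

lemma GJS_eq_expect_iDens (P1 P2 : A → ℝ) (α : ℝ) :
    GJS P1 P2 α = α * expect P1 (iDens1 P1 P2 α) + expect P2 (iDens2 P1 P2 α) := by
  simp only [GJS, klDivR, expect, iDens1, iDens2, mix, div_div_eq_mul_div,
    mul_comm (1 + α)]

lemma sumCDF_iDens_le_beta2_add_exp_mul_beta1 (hα : 0 < α) (h1 : IsDist P1) (h2 : IsDist P2)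
    {n : ℕ} (φ : BTest A α n) (v : ℝ) :
    sumCDF P1 P2 (iDens1 P1 P2 α) (iDens2 P1 P2 α) (trainLen α n) n v ≤
      beta2 φ P1 P2 + Real.exp v * beta1 φ (mix P1 P2 α) P2 := by
  have hP1 := mixDensity_left_mul_mix hα h1.1 h2.1
  have hP2 := mixDensity_right_mul_mix hα.le h1.1 h2.1
  have h := sumCDF_log_le_beta2_add_exp_mul_beta1 (isDist_mix hα.le h1 h2).1
    (mixDensity_nonneg hα.le h1.1 h2.1 h1.1) (mixDensity_nonneg hα.le h1.1 h2.1 h2.1)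
    (hP2.symm ▸ h2) φ v
  rwa [hP1, hP2] at h

lemma beta2_likelihoodTest_mixDensity (hα : 0 < α) (h1 : IsDist P1) (h2 : IsDist P2) (n : ℕ)
    (v : ℝ) :
    beta2 (likelihoodTest (mixDensity P1 P2 α P1) (mixDensity P1 P2 α P2) α n v) P1 P2 =
      sumCDF P1 P2 (iDens1 P1 P2 α) (iDens2 P1 P2 α) (trainLen α n) n v := by
  have hP1 := mixDensity_left_mul_mix hα h1.1 h2.1
  have hP2 := mixDensity_right_mul_mix hα.le h1.1 h2.1
  have h := beta2_likelihoodTest (α := α) (n := n) (mixDensity_nonneg hα.le h1.1 h2.1 h1.1)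
    (mixDensity_nonneg hα.le h1.1 h2.1 h2.1) (hP2.symm ▸ h2) v
  rwa [hP1, hP2] at h

lemma beta1_likelihoodTest_mixDensity_le (hα : 0 < α) (h1 : ∀ a, 0 ≤ P1 a) (h2 : ∀ a, 0 ≤ P2 a)
    {Q1 Q2 : A → ℝ} (hQ1 : IsDist Q1) (hQ2 : IsDist Q2) (n : ℕ) (v : ℝ) :
    beta1 (likelihoodTest (mixDensity P1 P2 α P1) (mixDensity P1 P2 α P2) α n v) Q1 Q2 ≤
      Real.exp ((1 + α) / α - v) := by
  have hr1 := mixDensity_nonneg hα.le h1 h2 h1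
  have hr2 := mixDensity_nonneg hα.le h1 h2 h2
  have hsum : α * expect Q1 (mixDensity P1 P2 α P1) + expect Q1 (mixDensity P1 P2 α P2) ≤ 1 + α :=
    calc _ = ∑ a, Q1 a * (α * mixDensity P1 P2 α P1 a + mixDensity P1 P2 α P2 a) := by
          rw [expect, expect, Finset.mul_sum, ← Finset.sum_add_distrib]
          exact Finset.sum_congr rfl fun a _ => by ring
      _ ≤ expect Q1 fun _ => 1 + α := Finset.sum_le_sum fun a _ =>
          mul_le_mul_of_nonneg_left (mul_mixDensity_add_mixDensity_le (by positivity) a) (hQ1.1 a)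
      _ = 1 + α := hQ1.expect_const _
  calc _ ≤ Real.exp (-v) * (expect Q1 (mixDensity P1 P2 α P1) ^ trainLen α n *
          expect Q1 (mixDensity P1 P2 α P2) ^ n) := beta1_likelihoodTest_le hQ1 hQ2 hr1 hr2 v
    _ ≤ Real.exp (-v) * Real.exp ((1 + α) / α) := by
        refine mul_le_mul_of_nonneg_left (pow_trainLen_mul_pow_le hα ?_ ?_ hsum n) (by positivity)
        exacts [Finset.sum_nonneg fun a _ => mul_nonneg (hQ1.1 a) (hr1 a),
          Finset.sum_nonneg fun a _ => mul_nonneg (hQ1.1 a) (hr2 a)]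
    _ = Real.exp ((1 + α) / α - v) := by rw [← Real.exp_add, neg_add_eq_sub]

end Mixture

section FundamentalLimit

variable {A : Type*} [Fintype A] {P1 P2 : A → ℝ} {α ε lam : ℝ} {n : ℕ}

/-- The exponents over which `lamStar` takes the supremum: `lam` is achievable if some test has
type-I error at most `exp (-n lam)` for all pairs of distributions and type-II error at most `ε` for
the pair `(P1, P2)`. -/
def IsAchievable (α : ℝ) (n : ℕ) (ε : ℝ) (P1 P2 : A → ℝ) (lam : ℝ) : Prop :=
  0 ≤ lam ∧ ∃ φ : BTest A α n,
    (∀ Q1 Q2 : A → ℝ, IsDist Q1 → IsDist Q2 → beta1 φ Q1 Q2 ≤ Real.exp (-(n * lam))) ∧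
      beta2 φ P1 P2 ≤ ε

lemma isAchievable_zero (hε : 0 ≤ ε) : IsAchievable α n ε P1 P2 0 := by
  refine ⟨le_rfl, fun _ _ _ => true, fun Q1 Q2 hQ1 hQ2 => ?_, ?_⟩
  · rw [mul_zero, neg_zero, Real.exp_zero]
    exact beta1_le_one _ hQ1 hQ2
  · simpa [beta2] using hε

lemma abs_lamStar_sub_le (hε : 0 ≤ ε) {a d : ℝ}
    (hupper : ∀ lam, IsAchievable α n ε P1 P2 lam → lam ≤ a + d)
    (hlower : 0 ≤ a - d → IsAchievable α n ε P1 P2 (a - d)) :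
    |lamStar α n ε P1 P2 - a| ≤ d := by
  have hbdd : BddAbove {lam | IsAchievable α n ε P1 P2 lam} := ⟨a + d, hupper⟩
  have hlub : IsLUB {lam | IsAchievable α n ε P1 P2 lam} (lamStar α n ε P1 P2) :=
    isLUB_csSup ⟨0, isAchievable_zero hε⟩ hbdd
  rw [abs_sub_le_iff, sub_le_iff_le_add', sub_le_comm]
  refine ⟨hlub.2 hupper, ?_⟩
  rcases le_total 0 (a - d) with hpos | hneg
  · exact hlub.1 (hlower hpos)
  · exact hneg.trans (hlub.1 (isAchievable_zero hε))

lemma IsAchievable.sumCDF_le (hα : 0 < α) (h1 : IsDist P1) (h2 : IsDist P2)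
    (hlam : IsAchievable α n ε P1 P2 lam) (v : ℝ) :
    sumCDF P1 P2 (iDens1 P1 P2 α) (iDens2 P1 P2 α) (trainLen α n) n v ≤
      ε + Real.exp (v - n * lam) := by
  obtain ⟨-, φ, hφ1, hφ2⟩ := hlam
  calc _ ≤ beta2 φ P1 P2 + Real.exp v * beta1 φ (mix P1 P2 α) P2 :=
        sumCDF_iDens_le_beta2_add_exp_mul_beta1 hα h1 h2 φ v
    _ ≤ ε + Real.exp v * Real.exp (-(n * lam)) := by
        gcongr
        exact hφ1 _ _ (isDist_mix hα.le h1 h2) h2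
    _ = ε + Real.exp (v - n * lam) := by rw [← Real.exp_add, sub_eq_add_neg]

lemma isAchievable_of_sumCDF_le (hα : 0 < α) (h1 : IsDist P1) (h2 : IsDist P2) (hlam : 0 ≤ lam)
    (hcdf : sumCDF P1 P2 (iDens1 P1 P2 α) (iDens2 P1 P2 α) (trainLen α n) n
      (n * lam + (1 + α) / α) ≤ ε) : IsAchievable α n ε P1 P2 lam := by
  refine ⟨hlam, likelihoodTest (mixDensity P1 P2 α P1) (mixDensity P1 P2 α P2) α n
    (n * lam + (1 + α) / α), fun Q1 Q2 hQ1 hQ2 => ?_, ?_⟩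
  · refine (beta1_likelihoodTest_mixDensity_le hα h1.1 h2.1 hQ1 hQ2 n _).trans_eq ?_
    rw [sub_add_cancel_right]
  · rwa [beta2_likelihoodTest_mixDensity hα h1 h2]

lemma exists_eventually_sumCDF_iDens_bracket (hα : 0 ≤ α) (hε : ε ∈ Set.Ioo 0 1) (h1 : IsDist P1)
    (h2 : IsDist P2) (hV : 0 < disp P1 P2 α) :
    ∃ K, ∀ᶠ n : ℕ in atTop,
      sumCDF P1 P2 (iDens1 P1 P2 α) (iDens2 P1 P2 α) (trainLen α n) n
          (n * (GJS P1 P2 α + √(disp P1 P2 α / n) * stdCDFInv ε) - K) ≤ ε ∧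
        ε + 1 / √n ≤ sumCDF P1 P2 (iDens1 P1 P2 α) (iDens2 P1 P2 α) (trainLen α n) n
          (n * (GJS P1 P2 α + √(disp P1 P2 α / n) * stdCDFInv ε) + K) := by
  obtain ⟨B, hB, hnormal⟩ := exists_abs_sumCDF_trainLen_sub_stdCDF_le h1 h2 hα hV
  rw [← GJS_eq_expect_iDens] at hnormal
  obtain ⟨K, hK⟩ := exists_eventually_quantile_bracket hB hnormal hε
  refine ⟨K, ?_⟩
  filter_upwards [hK, eventually_gt_atTop 0] with n hn hpos
  have hsqrt : (n : ℝ) * √(disp P1 P2 α / n) = √(n * disp P1 P2 α) := by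
    rw [← Real.sqrt_sq n.cast_nonneg, ← Real.sqrt_mul (sq_nonneg _), Real.sqrt_sq n.cast_nonneg]
    field_simp
  rw [mul_add, ← mul_assoc, hsqrt]
  exact hn

lemma IsAchievable.le_add_two_mul_log_div (hα : 0 < α) (h1 : IsDist P1) (h2 : IsDist P2)
    (hn : 1 < n) {a K : ℝ} (hK : K ≤ Real.log n)
    (hcdf : ε + 1 / √n ≤ sumCDF P1 P2 (iDens1 P1 P2 α) (iDens2 P1 P2 α) (trainLen α n) n
      (n * a + K)) (hlam : IsAchievable α n ε P1 P2 lam) : lam ≤ a + 2 * Real.log n / n := by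
  have hn' : (1 : ℝ) < n := by exact_mod_cast hn
  have hsqrt : 1 / (n : ℝ) < 1 / √n :=
    one_div_lt_one_div_of_lt (by positivity) ((Real.sqrt_lt_self_iff).2 hn')
  by_contra! hgt
  have hthreshold : n * a + K ≤ n * lam - Real.log n := by
    have := mul_lt_mul_of_pos_left hgt (by positivity : (0 : ℝ) < n)
    rw [mul_add, mul_div_cancel₀ _ (by positivity)] at this
    linarith
  have hconverse := hlam.sumCDF_le hα h1 h2 (n * lam - Real.log n)
  rw [sub_sub_cancel_left, Real.exp_neg, Real.exp_log (by positivity), ← one_div] at hconverse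
  linarith [sumCDF_monotone (f1 := iDens1 P1 P2 α) (f2 := iDens2 P1 P2 α) h1 h2 (trainLen α n) n
    hthreshold]

lemma isAchievable_sub_two_mul_log_div (hα : 0 < α) (h1 : IsDist P1) (h2 : IsDist P2)
    (hn : 0 < n) {a K : ℝ} (hK : K + (1 + α) / α ≤ 2 * Real.log n)
    (hcdf : sumCDF P1 P2 (iDens1 P1 P2 α) (iDens2 P1 P2 α) (trainLen α n) n (n * a - K) ≤ ε)
    (hpos : 0 ≤ a - 2 * Real.log n / n) :
    IsAchievable α n ε P1 P2 (a - 2 * Real.log n / n) := by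
  refine isAchievable_of_sumCDF_le hα h1 h2 hpos (le_trans (sumCDF_monotone h1 h2 _ n ?_) hcdf)
  rw [mul_sub, mul_div_cancel₀ _ (by positivity)]
  linarith

end FundamentalLimit

/-- Theorem 2 of the paper: second-order asymptotics of binary
classification: `λ*(n,α,ε|P1,P2) = GJS(P1,P2,α) + sqrt(V(P1,P2,α)/n) Φ⁻¹(ε) + O(log n / n)`. -/
theorem lamStar_second_order {X : Type*} [Fintype X] [DecidableEq X]
    (α ε : ℝ) (hα : 0 < α) (hε : ε ∈ Set.Ioo (0 : ℝ) 1)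
    (P1 P2 : X → ℝ) (h1 : IsDist P1) (h2 : IsDist P2)
    (hV : 0 < disp P1 P2 α) :
    ∃ C > (0 : ℝ), ∃ n0 : ℕ, ∀ n ≥ n0,
      |lamStar α n ε P1 P2 - GJS P1 P2 α -
        Real.sqrt (disp P1 P2 α / n) * stdCDFInv ε| ≤ C * Real.log n / n := by
  obtain ⟨K, hbracket⟩ := exists_eventually_sumCDF_iDens_bracket hα.le hε h1 h2 hV
  have hlog : Tendsto (fun n : ℕ => Real.log n) atTop atTop :=
    Real.tendsto_log_atTop.comp tendsto_natCast_atTop_atTop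
  obtain ⟨n0, hn0⟩ := eventually_atTop.1 <| hbracket.and <| (eventually_gt_atTop 1).and <|
    (hlog.eventually_ge_atTop K).and (hlog.eventually_ge_atTop ((1 + α) / α))
  refine ⟨2, two_pos, n0, fun n hn => ?_⟩
  obtain ⟨⟨hlower, hupper⟩, hn1, hK, hc⟩ := hn0 n hn
  rw [sub_sub]
  exact abs_lamStar_sub_le hε.1.le
    (fun lam hlam => hlam.le_add_two_mul_log_div hα h1 h2 hn1 hK hupper)
    (isAchievable_sub_two_mul_log_div hα h1 h2 (zero_lt_one.trans hn1) (by linarith) hlower)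

end Classification
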